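/- arXiv:1710.11368 — 6 statements merged into one kernel-verified Lean document; each statement's English description precedes it below -/
import Mathlib

section
/- Andô's dilation theorem: Let T₁ and T₂ be commuting contractions on a complex Hilbert space H. Then there exist a complex Hilbert space K, a linear isometry Π : H → K, and a pair of commuting isometries V₁, V₂ on K such that Π ∘ T₁* = V₁* ∘ Π and Π ∘ T₂* = V₂* ∘ Π (so in particular Π ∘ (T₁T₂)* = (V₁V₂)* ∘ Π). -/
open ContinuousLinearMap

universe u

namespace Ando

/-- Orthogonal direct sums of Hilbert spaces. -/
lemma exists_sum (X Y : Type u) [NormedAddCommGroup X] [InnerProductSpace ℂ X] [CompleteSpace X]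
    [NormedAddCommGroup Y] [InnerProductSpace ℂ Y] [CompleteSpace Y] :
    ∃ (K : Type u) (_ : NormedAddCommGroup K) (_ : InnerProductSpace ℂ K) (_ : CompleteSpace K)
      (i : X →L[ℂ] K) (j : Y →L[ℂ] K),
      (∀ x, adjoint i (i x) = x) ∧ (∀ y, adjoint j (j y) = y) ∧
      (∀ y, adjoint i (j y) = 0) ∧ (∀ x, adjoint j (i x) = 0) ∧
      (∀ k, i (adjoint i k) + j (adjoint j k) = k) := by
  let f : WithLp 2 (X × Y) →L[ℂ] X := WithLp.fstL 2 ℂ X Y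
  let g : WithLp 2 (X × Y) →L[ℂ] Y := WithLp.sndL 2 ℂ X Y
  have hf : ∀ x, adjoint f x = WithLp.toLp 2 (x, 0) := by
    intro x
    refine ext_inner_right ℂ fun v => ?_
    rw [adjoint_inner_left]
    simp [f, WithLp.prod_inner_apply]
  have hg : ∀ x, adjoint g x = WithLp.toLp 2 (0, x) := by
    intro x
    refine ext_inner_right ℂ fun v => ?_
    rw [adjoint_inner_left]
    simp [g, WithLp.prod_inner_apply]
  refine ⟨WithLp 2 (X × Y), inferInstance, inferInstance, inferInstance, adjoint f, adjoint g,
    ?_, ?_, ?_, ?_, ?_⟩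
  · intro x; rw [adjoint_adjoint, hf]; rfl
  · intro x; rw [adjoint_adjoint, hg]; rfl
  · intro x; rw [adjoint_adjoint, hg]; rfl
  · intro x; rw [adjoint_adjoint, hf]; rfl
  · intro k; rw [adjoint_adjoint, adjoint_adjoint, hf, hg, ← WithLp.toLp_add]
    simp only [Prod.mk_add_mk, add_zero, zero_add]
    rfl

/-- Unilateral shift with ampliations. -/
lemma exists_shift (B : Type u) [NormedAddCommGroup B] [InnerProductSpace ℂ B] [CompleteSpace B] :
    ∃ (L : Type u) (_ : NormedAddCommGroup L) (_ : InnerProductSpace ℂ L) (_ : CompleteSpace L)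
      (S : L →L[ℂ] L) (c : B →L[ℂ] L) (amp : (B →L[ℂ] B) → (L →L[ℂ] L)),
      (∀ x, adjoint S (S x) = x) ∧ (∀ y, adjoint c (c y) = y) ∧
      (∀ y, adjoint S (c y) = 0) ∧
      (∀ A C x, amp A (amp C x) = amp (A * C) x) ∧ (∀ x, amp 1 x = x) ∧
      (∀ A C x, amp (A + C) x = amp A x + amp C x) ∧ (∀ A, adjoint (amp A) = amp (adjoint A)) ∧
      (∀ A x, amp A (S x) = S (amp A x)) ∧ (∀ A b, amp A (c b) = c (A b)) := by
  let G : ℕ → Type u := fun _ => B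
  have hp : 0 < (2 : ENNReal).toReal := by norm_num
  have e2 : (2 : ENNReal).toReal = 2 := by norm_num
  have hmem : ∀ (A : B →L[ℂ] B) (f : lp G 2), Memℓp (E := G) (fun n => A (f n)) 2 := by
    intro A f
    refine memℓp_gen (Summable.of_nonneg_of_le (fun n => by positivity) (fun n => ?_)
      ((lp.hasSum_norm hp f).summable.mul_left (‖A‖ ^ (2 : ENNReal).toReal)))
    rw [← Real.mul_rpow (norm_nonneg _) (norm_nonneg _)]
    exact Real.rpow_le_rpow (norm_nonneg _) (A.le_opNorm _) hp.le
  let ampL : (B →L[ℂ] B) → (lp G 2 →ₗ[ℂ] lp G 2) := fun A =>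
    { toFun := fun f => ⟨fun n => A (f n), hmem A f⟩
      map_add' := fun f g => by ext n; exact map_add A (f n) (g n)
      map_smul' := fun a f => by ext n; exact map_smul A a (f n) }
  have hbd : ∀ A f, ‖ampL A f‖ ≤ ‖A‖ * ‖f‖ := by
    intro A f
    refine lp.norm_le_of_tsum_le hp (by positivity) ?_
    rw [Real.mul_rpow (norm_nonneg _) (norm_nonneg _), lp.norm_rpow_eq_tsum hp f, ← tsum_mul_left]
    refine Summable.tsum_le_tsum (fun n => ?_) (lp.hasSum_norm hp (ampL A f)).summable
      ((lp.hasSum_norm hp f).summable.mul_left (‖A‖ ^ (2 : ENNReal).toReal))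
    rw [← Real.mul_rpow (norm_nonneg _) (norm_nonneg _)]
    exact Real.rpow_le_rpow (norm_nonneg _) (A.le_opNorm _) hp.le
  let amp : (B →L[ℂ] B) → (lp G 2 →L[ℂ] lp G 2) := fun A => (ampL A).mkContinuous ‖A‖ (hbd A)
  have hamp : ∀ A (f : lp G 2) n, amp A f n = A (f n) := fun _ _ _ => rfl
  let sh : (ℕ → B) → (ℕ → B) := fun f n => Nat.casesOn n 0 f
  have hsh : ∀ f : lp G 2, Memℓp (E := G) (sh f) 2 := by
    intro f
    refine memℓp_gen ?_
    rw [← summable_nat_add_iff 1]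
    exact (lp.hasSum_norm hp f).summable
  let SL : lp G 2 →ₗ[ℂ] lp G 2 :=
    { toFun := fun f => ⟨sh f, hsh f⟩
      map_add' := fun f g => by
        ext n
        rcases n with _ | n
        · exact (add_zero (0 : B)).symm
        · rfl
      map_smul' := fun a f => by
        ext n
        rcases n with _ | n
        · exact (smul_zero a).symm
        · rfl }
  have hSL0 : ∀ f : lp G 2, SL f 0 = 0 := fun _ => rfl
  have hSL1 : ∀ (f : lp G 2) n, SL f (n+1) = f n := fun _ _ => rfl
  have hin : ∀ f g : lp G 2, inner ℂ (SL f) (SL g) = inner ℂ f g := by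
    intro f g
    rw [lp.inner_eq_tsum, lp.inner_eq_tsum]
    have hsum : Summable fun n => inner ℂ (SL f n) (SL g n) :=
      lp.summable_inner (𝕜 := ℂ) (SL f) (SL g)
    rw [hsum.tsum_eq_zero_add, hSL0, inner_zero_left, zero_add]
    rfl
  let SI : lp G 2 →ₗᵢ[ℂ] lp G 2 := SL.isometryOfInner hin
  let S : lp G 2 →L[ℂ] lp G 2 := SI.toContinuousLinearMap
  have hS0 : ∀ f : lp G 2, S f 0 = 0 := fun _ => rfl
  have hS1 : ∀ (f : lp G 2) n, S f (n+1) = f n := fun _ _ => rfl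
  let c : B →L[ℂ] lp G 2 := lp.singleContinuousLinearMap ℂ G 2 0
  have hc : ∀ b, c b = lp.single (E := G) 2 0 b := fun _ => rfl
  refine ⟨lp G 2, inferInstance, inferInstance, inferInstance, S, c, amp,
    ?_, ?_, ?_, ?_, ?_, ?_, ?_, ?_, ?_⟩
  · intro x
    refine ext_inner_right ℂ fun v => ?_
    rw [adjoint_inner_left]
    exact hin x v
  · intro y
    refine ext_inner_right ℂ fun v => ?_
    rw [adjoint_inner_left, hc, hc, lp.inner_single_left]
    simp
  · intro y
    refine ext_inner_right ℂ fun v => ?_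
    rw [adjoint_inner_left, hc, lp.inner_single_left, hS0, inner_zero_right, inner_zero_left]
  · intro A C x; rfl
  · intro x; rfl
  · intro A C x; rfl
  · intro A
    refine ((eq_adjoint_iff _ _).2 fun x y => ?_).symm
    rw [lp.inner_eq_tsum, lp.inner_eq_tsum]
    refine tsum_congr fun n => ?_
    rw [hamp, hamp]
    exact adjoint_inner_left A _ _
  · intro A x
    ext n
    rcases n with _ | n
    · exact map_zero A
    · rfl
  · intro A b
    ext n
    rw [hamp, hc, hc]
    rcases n with _ | n
    · simp
    · simp

/-- A partial isometry taking `A x` to `C x`. -/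
lemma exists_partial_isometry {X E : Type u} [NormedAddCommGroup X] [InnerProductSpace ℂ X]
    [NormedAddCommGroup E] [InnerProductSpace ℂ E] [CompleteSpace E]
    (A C : X →L[ℂ] E) (h : ∀ x, ‖A x‖ = ‖C x‖) :
    ∃ P : E →L[ℂ] E, (∀ x, P (A x) = C x) ∧ (∀ x, adjoint P (P (A x)) = A x) ∧
      (∀ y, P (adjoint P (P y)) = P y) := by
  let M : Submodule ℂ E := (LinearMap.range A.toLinearMap).topologicalClosure
  have hAM : ∀ x, A x ∈ M := fun x => Submodule.le_topologicalClosure _ ⟨x, rfl⟩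
  have : CompleteSpace M := (Submodule.isClosed_topologicalClosure _).completeSpace_coe
  let e : X →ₗ[ℂ] M := A.toLinearMap.codRestrict M hAM
  have hd : DenseRange e := by
    intro y
    rw [closure_subtype]
    have : (Subtype.val '' Set.range e : Set E) = LinearMap.range A.toLinearMap := by
      ext z
      simp [e]
    rw [this]
    exact y.2
  have hn : ∀ x, ‖C.toLinearMap x‖ ≤ 1 * ‖e x‖ := fun x => by
    rw [one_mul]; exact (h x).symm.le
  let U : M →L[ℂ] E := C.toLinearMap.extendOfNorm e
  have hU : ∀ x, U (e x) = C x := LinearMap.extendOfNorm_eq hd ⟨1, hn⟩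
  have hUn : ∀ y, ‖U y‖ = ‖y‖ := by
    intro y
    refine hd.induction_on (p := fun y => ‖U y‖ = ‖y‖) y
      (isClosed_eq (by fun_prop) (by fun_prop)) fun x => ?_
    rw [hU]; exact (h x).symm
  let UI : M →ₗᵢ[ℂ] E := ⟨U.toLinearMap, hUn⟩
  have hUU : ∀ y, adjoint U (U y) = y := by
    intro y
    refine ext_inner_right ℂ fun v => ?_
    rw [adjoint_inner_left]
    exact UI.inner_map_map y v
  have hJ : ∀ m : M, adjoint M.subtypeL m = m := by
    intro m
    refine ext_inner_right ℂ fun v => ?_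
    rw [adjoint_inner_left]
    rfl
  refine ⟨U ∘L adjoint M.subtypeL, fun x => ?_, fun x => ?_, fun x => ?_⟩
  · rw [comp_apply]
    have := hJ (e x)
    rw [show ((e x : M) : E) = A x from rfl] at this
    rw [this, hU]
  · have := hJ (e x)
    rw [show ((e x : M) : E) = A x from rfl] at this
    simp only [adjoint_comp, adjoint_adjoint, comp_apply, hUU, this]
    rfl
  · simp only [adjoint_comp, adjoint_adjoint, comp_apply, hUU]
    rw [Submodule.subtypeL_apply, hJ]

/-- Commuting isometric lifts on `H ⊕ L` out of block data. -/
lemma assemble {H L : Type u} [NormedAddCommGroup H] [InnerProductSpace ℂ H] [CompleteSpace H]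
    [NormedAddCommGroup L] [InnerProductSpace ℂ L] [CompleteSpace L]
    (T₁ T₂ : H →L[ℂ] H) (C₁ C₂ : H →L[ℂ] L) (Z₁ Z₂ : L →L[ℂ] L)
    (hT : ∀ x, T₁ (T₂ x) = T₂ (T₁ x))
    (h₁ : ∀ x, adjoint T₁ (T₁ x) + adjoint C₁ (C₁ x) = x)
    (h₂ : ∀ x, adjoint T₂ (T₂ x) + adjoint C₂ (C₂ x) = x)
    (hZ₁ : ∀ x, adjoint Z₁ (Z₁ x) = x) (hZ₂ : ∀ x, adjoint Z₂ (Z₂ x) = x)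
    (hZC₁ : ∀ x, adjoint Z₁ (C₁ x) = 0) (hZC₂ : ∀ x, adjoint Z₂ (C₂ x) = 0)
    (hZ : ∀ x, Z₁ (Z₂ x) = Z₂ (Z₁ x))
    (hC : ∀ x, C₁ (T₂ x) + Z₁ (C₂ x) = C₂ (T₁ x) + Z₂ (C₁ x)) :
    ∃ (K : Type u) (_ : NormedAddCommGroup K) (_ : InnerProductSpace ℂ K) (_ : CompleteSpace K)
      (Pi : H →ₗᵢ[ℂ] K) (V₁ V₂ : K →L[ℂ] K),
        adjoint V₁ * V₁ = 1 ∧ adjoint V₂ * V₂ = 1 ∧ V₁ * V₂ = V₂ * V₁ ∧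
        (∀ h : H, Pi (adjoint T₁ h) = adjoint V₁ (Pi h)) ∧
        (∀ h : H, Pi (adjoint T₂ h) = adjoint V₂ (Pi h)) := by
  obtain ⟨K, _, _, _, i, j, hii, hjj, hij, hji, hs⟩ := exists_sum H L
  let V : (H →L[ℂ] H) → (H →L[ℂ] L) → (L →L[ℂ] L) → (K →L[ℂ] K) := fun T C Z =>
    i ∘L T ∘L adjoint i + j ∘L C ∘L adjoint i + j ∘L Z ∘L adjoint j
  have hiso : ∀ T C Z, (∀ x, adjoint T (T x) + adjoint C (C x) = x) →
      (∀ x, adjoint Z (Z x) = x) → (∀ x, adjoint Z (C x) = 0) →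
      adjoint (V T C Z) * V T C Z = 1 := by
    intro T C Z h hZ hZC
    have hCZ : ∀ x, adjoint C (Z x) = 0 := by
      intro x
      refine ext_inner_right ℂ fun v => ?_
      rw [adjoint_inner_left, ← adjoint_inner_right, hZC]
      simp
    ext x
    simp only [V, mul_def, one_apply_eq_self, map_add, adjoint_comp, adjoint_adjoint, add_apply,
      comp_apply, hii, hjj, hij, hji, map_zero, add_zero, zero_add, hZ, hZC, hCZ]
    conv_rhs => rw [← hs x, ← h (adjoint i x)]
    simp only [map_add]
  have hadj : ∀ T C Z x, i (adjoint T x) = adjoint (V T C Z) (i x) := by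
    intro T C Z x
    simp [V, map_add, adjoint_comp, hii, hji]
  refine ⟨K, _, _, ‹_›, ⟨i.toLinearMap, fun x => ?_⟩, V T₁ C₁ Z₁, V T₂ C₂ Z₂,
    hiso _ _ _ h₁ hZ₁ hZC₁, hiso _ _ _ h₂ hZ₂ hZC₂, ?_, hadj _ _ _, hadj _ _ _⟩
  · exact (norm_map_iff_adjoint_comp_self i).2 (by ext y; exact hii y) x
  · ext x
    have := congrArg j (hC (adjoint i x))
    simp only [map_add] at this
    simp only [V, mul_def, map_add, add_apply,
      comp_apply, hii, hjj, hij, hji, map_zero, add_zero, zero_add, hZ, hT]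
    rw [add_assoc (i _), this]
    abel

lemma exists_defect {H : Type u} [NormedAddCommGroup H] [InnerProductSpace ℂ H] [CompleteSpace H]
    (T : H →L[ℂ] H) (hT : ‖T‖ ≤ 1) :
    ∃ D : H →L[ℂ] H, ∀ x, adjoint D (D x) = x - adjoint T (T x) := by
  have h : 0 ≤ 1 - adjoint T * T := by
    rw [sub_nonneg]
    have := CStarAlgebra.star_mul_le_algebraMap_norm_sq (a := T)
    refine this.trans ?_
    rw [Algebra.algebraMap_eq_smul_one]
    nth_rw 2 [← one_smul ℝ (1 : H →L[ℂ] H)]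
    exact smul_le_smul_of_nonneg_right (by nlinarith [norm_nonneg T]) zero_le_one
  obtain ⟨D, hD⟩ := CStarAlgebra.nonneg_iff_eq_star_mul_self.1 h
  exact ⟨D, fun x => (congrArg (fun F : H →L[ℂ] H => F x) hD).symm⟩

/-- The half-shift construction. -/
lemma half_shift {H B : Type u} [NormedAddCommGroup H] [InnerProductSpace ℂ H] [CompleteSpace H]
    [NormedAddCommGroup B] [InnerProductSpace ℂ B] [CompleteSpace B]
    (T₁ T₂ D₁ D₂ : H →L[ℂ] H) (hT : ∀ x, T₁ (T₂ x) = T₂ (T₁ x))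
    (hD₁ : ∀ x, adjoint D₁ (D₁ x) = x - adjoint T₁ (T₁ x))
    (hD₂ : ∀ x, adjoint D₂ (D₂ x) = x - adjoint T₂ (T₂ x))
    (ι : H →L[ℂ] B) (J p q G : B →L[ℂ] B)
    (hι : ∀ x, adjoint ι (ι x) = x) (hpι : ∀ x, p (ι x) = ι x) (hqι : ∀ x, q (ι x) = 0)
    (hpa : adjoint p = p) (hqa : adjoint q = q) (hJa : adjoint J = J)
    (hpp : p * p = p) (hqq : q * q = q) (hpq : p * q = 0) (hqp : q * p = 0) (hs : p + q = 1)
    (hJJ : J * J = 1) (hpJ : p * J = J * q) (hqJ : q * J = J * p)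
    (hG : adjoint G * G = 1) (hG' : G * adjoint G = 1)
    (hGD : ∀ x, G (ι (D₁ (T₂ x)) + J (ι (D₂ x))) = ι (D₂ (T₁ x)) + J (ι (D₁ x))) :
    ∃ (K : Type u) (_ : NormedAddCommGroup K) (_ : InnerProductSpace ℂ K) (_ : CompleteSpace K)
      (Pi : H →ₗᵢ[ℂ] K) (V₁ V₂ : K →L[ℂ] K),
        adjoint V₁ * V₁ = 1 ∧ adjoint V₂ * V₂ = 1 ∧ V₁ * V₂ = V₂ * V₁ ∧
        (∀ h : H, Pi (adjoint T₁ h) = adjoint V₁ (Pi h)) ∧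
        (∀ h : H, Pi (adjoint T₂ h) = adjoint V₂ (Pi h)) := by
  obtain ⟨L, _, _, _, S, c, amp, hSS, hcc, hSc, hmul, hone, hadd, hadj, haS, hac⟩ :=
    exists_shift B
  have hSa : ∀ A x, adjoint S (amp A x) = amp A (adjoint S x) := by
    intro A x
    refine ext_inner_right ℂ fun v => ?_
    rw [adjoint_inner_left, ← adjoint_inner_right, hadj, haS, ← adjoint_inner_left,
      ← adjoint_inner_left (amp (adjoint A)), hadj, adjoint_adjoint]
  have hz : ∀ x, amp 0 x = 0 := by
    intro x
    have := hadd 0 0 x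
    rw [add_zero] at this
    exact left_eq_add.1 this
  have app : ∀ x, amp p (amp p x) = amp p x := fun x => by rw [hmul, hpp]
  have aqq : ∀ x, amp q (amp q x) = amp q x := fun x => by rw [hmul, hqq]
  have apq : ∀ x, amp p (amp q x) = 0 := fun x => by rw [hmul, hpq, hz]
  have aqp : ∀ x, amp q (amp p x) = 0 := fun x => by rw [hmul, hqp, hz]
  have aJJ : ∀ x, amp J (amp J x) = x := fun x => by rw [hmul, hJJ, hone]
  have apJ : ∀ x, amp p (amp J x) = amp J (amp q x) := fun x => by rw [hmul, hpJ, hmul]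
  have aqJ : ∀ x, amp q (amp J x) = amp J (amp p x) := fun x => by rw [hmul, hqJ, hmul]
  have asum : ∀ x, amp p x + amp q x = x := fun x => by rw [← hadd, hs, hone]
  have aG : ∀ x, amp (adjoint G) (amp G x) = x := fun x => by rw [hmul, hG, hone]
  have aG' : ∀ x, amp G (amp (adjoint G) x) = x := fun x => by rw [hmul, hG', hone]
  have bG : ∀ x, adjoint G (G x) = x := fun x => congrArg (fun F : B →L[ℂ] B => F x) hG
  let R : L →L[ℂ] L := amp J ∘L amp p + S ∘L amp J ∘L amp q
  have hR : ∀ x, R x = amp J (amp p x) + S (amp J (amp q x)) := fun _ => rfl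
  have hRa : ∀ x, adjoint R x = amp p (amp J x) + amp q (amp J (adjoint S x)) := by
    intro x
    simp only [R, map_add, adjoint_comp, hadj, hpa, hqa, hJa, add_apply, comp_apply]
  have hRR : ∀ x, R (R x) = S x := by
    intro x
    simp only [hR, map_add, apJ, aqJ, aJJ, haS, app, aqq, apq, aqp, map_zero, add_zero, zero_add]
    rw [← map_add, add_comm, asum]
  have hRi : ∀ x, adjoint R (R x) = x := by
    intro x
    simp only [hR, hRa, map_add, hSS, hSa, apJ, aqJ, aJJ, haS, app, aqq, apq, aqp, map_zero,
      add_zero, zero_add, asum]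
  have hRc : ∀ x, R (c (ι x)) = c (J (ι x)) := by
    intro x
    simp only [hR, hac, hpι, hqι, map_zero, add_zero]
  have hRac : ∀ x, adjoint R (c (ι x)) = 0 := by
    intro x
    rw [hRa, hSc, apJ, hac, hqι]
    simp only [map_zero, add_zero]
  refine assemble T₁ T₂ (c ∘L G ∘L ι ∘L D₁) (c ∘L ι ∘L D₂) (amp G ∘L R)
    (R ∘L amp (adjoint G)) hT ?_ ?_ ?_ ?_ ?_ ?_ ?_ ?_
  · intro x
    simp only [adjoint_comp, comp_apply, hcc, bG, hι, hD₁]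
    abel
  · intro x
    simp only [adjoint_comp, comp_apply, hcc, hι, hD₂]
    abel
  · intro x
    simp only [adjoint_comp, comp_apply, hadj, aG, hRi]
  · intro x
    simp only [adjoint_comp, comp_apply, hadj, adjoint_adjoint, aG', hRi]
  · intro x
    simp only [adjoint_comp, comp_apply, hadj, ← hac, aG, hRac]
  · intro x
    simp only [adjoint_comp, comp_apply, hadj, adjoint_adjoint, hRac, map_zero]
  · intro x
    simp only [comp_apply, aG, hRR, haS, aG']
  · intro x
    simp only [comp_apply, hac, bG, hRc]
    rw [← map_add, ← map_add, hGD, map_add]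

end Ando

/-- **Andô's dilation theorem.** For commuting contractions `T₁, T₂` on a complex Hilbert
space `H` there exist a complex Hilbert space `K`, a linear isometry `Π : H → K` and a pair
of commuting isometries `V₁, V₂` on `K` with `Π ∘ T₁* = V₁* ∘ Π` and `Π ∘ T₂* = V₂* ∘ Π`. -/
theorem ando_dilation {H : Type u} [NormedAddCommGroup H] [InnerProductSpace ℂ H]
    [CompleteSpace H] (T₁ T₂ : H →L[ℂ] H)
    (hT₁ : ‖T₁‖ ≤ 1) (hT₂ : ‖T₂‖ ≤ 1) (hcomm : T₁ * T₂ = T₂ * T₁) :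
    ∃ (K : Type u) (_ : NormedAddCommGroup K) (_ : InnerProductSpace ℂ K) (_ : CompleteSpace K)
      (Pi : H →ₗᵢ[ℂ] K) (V₁ V₂ : K →L[ℂ] K),
        adjoint V₁ * V₁ = 1 ∧ adjoint V₂ * V₂ = 1 ∧ V₁ * V₂ = V₂ * V₁ ∧
        (∀ h : H, Pi (adjoint T₁ h) = adjoint V₁ (Pi h)) ∧
        (∀ h : H, Pi (adjoint T₂ h) = adjoint V₂ (Pi h)) := by
  have hT : ∀ x, T₁ (T₂ x) = T₂ (T₁ x) :=
    fun x => congrArg (fun F : H →L[ℂ] H => F x) hcomm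
  obtain ⟨D₁, hD₁⟩ := Ando.exists_defect T₁ hT₁
  obtain ⟨D₂, hD₂⟩ := Ando.exists_defect T₂ hT₂
  obtain ⟨E, _, _, _, i, i', hii, hii', hi0, hi0', hi⟩ := Ando.exists_sum H H
  obtain ⟨B, _, _, _, j, j', hjj, hjj', hj0, hj0', hj⟩ := Ando.exists_sum E E
  let A : H →L[ℂ] E := i ∘L D₁ ∘L T₂ + i' ∘L D₂
  let C : H →L[ℂ] E := i ∘L D₂ ∘L T₁ + i' ∘L D₁
  have hA : ∀ x, A x = i (D₁ (T₂ x)) + i' (D₂ x) := fun _ => rfl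
  have hC : ∀ x, C x = i (D₂ (T₁ x)) + i' (D₁ x) := fun _ => rfl
  have hAC : ∀ x, ‖A x‖ = ‖C x‖ := by
    intro x
    have h1 : adjoint A (A x) = adjoint C (C x) := by
      simp only [A, C, map_add, adjoint_comp, add_apply, comp_apply, hii, hii', hi0, hi0',
        map_zero, add_zero, zero_add, hD₁, hD₂, map_sub, hT]
      have h2 : ∀ y, adjoint T₂ (adjoint T₁ y) = adjoint T₁ (adjoint T₂ y) := by
        intro y
        refine ext_inner_right ℂ fun v => ?_
        simp only [adjoint_inner_left, hT]
      rw [h2]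
      abel
    have h3 : inner ℂ (A x) (A x) = inner ℂ (C x) (C x) := by
      rw [← adjoint_inner_left, h1, adjoint_inner_left]
    rw [@norm_eq_sqrt_re_inner ℂ, @norm_eq_sqrt_re_inner ℂ _ _ _ _ (C x), h3]
  obtain ⟨P, hPA, hPPA, hP⟩ := Ando.exists_partial_isometry A C hAC
  have hP' : ∀ y, adjoint P (P (adjoint P y)) = adjoint P y := by
    intro y
    refine ext_inner_right ℂ fun v => ?_
    rw [adjoint_inner_left, ← adjoint_inner_right, ← adjoint_inner_right, adjoint_adjoint, hP,
      adjoint_inner_left]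
  let N : (E →L[ℂ] E) → (B →L[ℂ] B) := fun X => j ∘L X ∘L adjoint j + j' ∘L X ∘L adjoint j'
  have hN : ∀ X Y, N X * N Y = N (X * Y) := by
    intro X Y
    ext x
    simp only [N, mul_def, add_apply, comp_apply, map_add, hjj, hjj', hj0, hj0', map_zero,
      add_zero, zero_add]
  have hNa : ∀ X, adjoint (N X) = N (adjoint X) := by
    intro X
    simp only [N, map_add, adjoint_comp, adjoint_adjoint, comp_assoc]
  have hN1 : N 1 = 1 := by
    ext x
    exact hj x
  have hN0 : N 0 = 0 := by
    ext x
    simp [N]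
  have hNadd : ∀ X Y, N X + N Y = N (X + Y) := by
    intro X Y
    ext x
    simp only [N, add_apply, comp_apply, map_add]
    abel
  have hNj : ∀ X x, N X (j x) = j (X x) := by
    intro X x
    simp only [N, add_apply, comp_apply, hjj, hj0', map_zero, add_zero]
  let J₀ : E →L[ℂ] E := i ∘L adjoint i' + i' ∘L adjoint i
  let p₀ : E →L[ℂ] E := i ∘L adjoint i
  let q₀ : E →L[ℂ] E := i' ∘L adjoint i'
  let G : B →L[ℂ] B := j ∘L P ∘L adjoint j + j ∘L (1 - P ∘L adjoint P) ∘L adjoint j' +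
    j' ∘L (1 - adjoint P ∘L P) ∘L adjoint j - j' ∘L adjoint P ∘L adjoint j'
  have h1 : ∀ (X : Type u) [NormedAddCommGroup X] [InnerProductSpace ℂ X] [CompleteSpace X],
      adjoint (1 : X →L[ℂ] X) = 1 := fun X _ _ _ => star_one (X →L[ℂ] X)
  refine Ando.half_shift T₁ T₂ D₁ D₂ hT hD₁ hD₂ (j ∘L i) (N J₀) (N p₀) (N q₀) G
    ?_ ?_ ?_ ?_ ?_ ?_ ?_ ?_ ?_ ?_ ?_ ?_ ?_ ?_ ?_ ?_ ?_
  · intro x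
    simp only [adjoint_comp, comp_apply, hjj, hii]
  · intro x
    simp only [comp_apply, hNj, p₀, hii]
  · intro x
    simp only [comp_apply, hNj, q₀, hi0', map_zero]
  · simp only [hNa, p₀, adjoint_comp, adjoint_adjoint]
  · simp only [hNa, q₀, adjoint_comp, adjoint_adjoint]
  · simp only [hNa, J₀, adjoint_comp, adjoint_adjoint, map_add]
    rw [add_comm]
  · rw [hN]; congr 1; ext x
    simp only [p₀, mul_def, comp_apply, hii]
  · rw [hN]; congr 1; ext x
    simp only [q₀, mul_def, comp_apply, hii']
  · rw [hN, ← hN0]; congr 1; ext x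
    simp only [p₀, q₀, mul_def, comp_apply, hi0, map_zero, zero_apply]
  · rw [hN, ← hN0]; congr 1; ext x
    simp only [p₀, q₀, mul_def, comp_apply, hi0', map_zero, zero_apply]
  · rw [hNadd, ← hN1]; congr 1; ext x
    exact hi x
  · rw [hN, ← hN1]; congr 1; ext x
    simp only [J₀, mul_def, comp_apply, add_apply, map_add, hii, hii', hi0, hi0', map_zero,
      zero_add, add_zero]
    exact (add_comm _ _).trans (hi x)
  · rw [hN, hN]; congr 1; ext x
    simp only [J₀, p₀, q₀, mul_def, comp_apply, add_apply, map_add, hii, hii', hi0, hi0',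
      map_zero, zero_add, add_zero]
  · rw [hN, hN]; congr 1; ext x
    simp only [J₀, p₀, q₀, mul_def, comp_apply, add_apply, map_add, hii, hii', hi0, hi0',
      map_zero, zero_add, add_zero]
  · ext x
    simp only [G, mul_def, comp_apply, add_apply, sub_apply, map_add, map_sub, adjoint_comp,
      adjoint_adjoint, h1, hjj, hjj', hj0, hj0', map_zero, zero_add, add_zero, sub_zero, zero_sub,
      map_neg, one_apply_eq_self, hP, hP']
    conv_rhs => rw [← hj x]
    abel
  · ext x
    simp only [G, mul_def, comp_apply, add_apply, sub_apply, map_add, map_sub, adjoint_comp,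
      adjoint_adjoint, h1, hjj, hjj', hj0, hj0', map_zero, zero_add, add_zero, sub_zero, zero_sub,
      map_neg, one_apply_eq_self, hP, hP']
    conv_rhs => rw [← hj x]
    abel
  · intro x
    have hJi : ∀ y, J₀ (i y) = i' y := by
      intro y
      simp only [J₀, comp_apply, add_apply, hii, hi0', map_zero, zero_add]
    have hGj : ∀ y, G (j y) = j (P y) + j' (y - adjoint P (P y)) := by
      intro y
      simp only [G, comp_apply, add_apply, sub_apply, hjj, hj0', map_zero, add_zero, sub_zero,
        one_apply_eq_self]
    simp only [comp_apply, hNj, hJi]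
    rw [← map_add, ← map_add, ← hA, ← hC, hGj, hPPA, hPA, sub_self, map_zero, add_zero]
end

section
/- Fundamental operators: Let T₁, T₂ be commuting contractions on a complex Hilbert space H, T = T₁T₂, and let p be the orthogonal projection of H onto 𝒟_T. Then there exist bounded operators F₁, F₂ on H with ‖F₁‖ ≤ 1, ‖F₂‖ ≤ 1, F₁ = pF₁p, F₂ = pF₂p, satisfying T₁ − T₂*T = D_T F₁ D_T and T₂ − T₁*T = D_T F₂ D_T. Moreover such F₁ and F₂ are unique: if F, F′ are bounded operators on H with F = pFp, F′ = pF′p and D_T F D_T = D_T F′ D_T, then F = F′. -/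
open ContinuousLinearMap

theorem fo_eq_zero {H : Type*} [NormedAddCommGroup H] [InnerProductSpace ℂ H]
    (D p B : H →L[ℂ] H) (hprange : Set.range p = closure (Set.range D)) (h : B * D = 0) :
    B * p = 0 := by
  ext x
  have hx : p x ∈ closure (Set.range D) := hprange ▸ Set.mem_range_self x
  have hs : closure (Set.range D) ⊆ {y | B y = 0} := by
    apply closure_minimal
    · rintro _ ⟨z, rfl⟩
      exact congrArg (fun f : H →L[ℂ] H => f z) h
    · exact isClosed_eq B.continuous continuous_const
  exact hs hx

theorem fo_pD {H : Type*} [NormedAddCommGroup H] [InnerProductSpace ℂ H]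
    (D p : H →L[ℂ] H) (hpidem : p * p = p)
    (hprange : Set.range p = closure (Set.range D)) (x : H) : p (D x) = D x := by
  have : D x ∈ Set.range p := hprange ▸ subset_closure (Set.mem_range_self x)
  obtain ⟨y, hy⟩ := this
  rw [← hy]
  exact congrArg (fun f : H →L[ℂ] H => f y) hpidem

theorem fo_pnorm {H : Type*} [NormedAddCommGroup H] [InnerProductSpace ℂ H] [CompleteSpace H]
    (p : H →L[ℂ] H) (hpadj : adjoint p = p) (hpidem : p * p = p) (x : H) : ‖p x‖ ≤ ‖x‖ := by
  have h1 : inner ℂ (p x) (p x) = inner ℂ x (p x) := by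
    conv_lhs => rw [← adjoint_inner_right, hpadj]
    rw [show p (p x) = p x from congrArg (fun f : H →L[ℂ] H => f x) hpidem]
  have h2 : ‖inner ℂ (p x) (p x)‖ ≤ ‖x‖ * ‖p x‖ := h1 ▸ norm_inner_le_norm x (p x)
  rw [inner_self_eq_norm_sq_to_K] at h2
  simp at h2
  by_contra hc
  push Not at hc
  nlinarith [norm_nonneg x, norm_nonneg (p x)]

theorem fo_douglas {H : Type*} [NormedAddCommGroup H] [InnerProductSpace ℂ H] [CompleteSpace H]
    (D p B : H →L[ℂ] H) (hpadj : adjoint p = p) (hpidem : p * p = p)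
    (hprange : Set.range p = closure (Set.range D)) (h : ∀ x, ‖B x‖ ≤ ‖D x‖) :
    ∃ X : H →L[ℂ] H, ‖X‖ ≤ 1 ∧ B = X * D ∧ X * p = X := by
  let K : Submodule ℂ H := D.toLinearMap.range.topologicalClosure
  have hK : (K : Set H) = closure (Set.range D) := by
    rfl
  let e : H →ₗ[ℂ] K := D.toLinearMap.codRestrict K
    (fun x => by
      change D x ∈ (K : Set H)
      rw [hK]; exact subset_closure (Set.mem_range_self x))
  have he : DenseRange e := by
    intro y
    rw [closure_subtype]
    have : Subtype.val '' Set.range e = Set.range D := by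
      rw [← Set.range_comp]; rfl
    change (y : H) ∈ closure (Subtype.val '' Set.range e)
    rw [this, ← hK]
    exact y.2
  let q : H →L[ℂ] K := p.codRestrict K (fun x => by
      change p x ∈ (K : Set H)
      rw [hK, ← hprange]; exact Set.mem_range_self x)
  have hb : ∀ x, ‖B.toLinearMap x‖ ≤ 1 * ‖e x‖ := fun x => by
    rw [one_mul]; exact h x
  let Y : K →L[ℂ] H := B.toLinearMap.extendOfNorm e
  have hY : ‖Y‖ ≤ 1 := LinearMap.opNorm_extendOfNorm_le he zero_le_one hb
  refine ⟨Y ∘L q, ?_, ?_, ?_⟩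
  · refine ContinuousLinearMap.opNorm_le_bound _ zero_le_one fun x => ?_
    calc ‖Y (q x)‖ ≤ 1 * ‖q x‖ := Y.le_of_opNorm_le hY _
      _ ≤ 1 * ‖x‖ := by gcongr; exact fo_pnorm p hpadj hpidem x
  · ext x
    have : q (D x) = e x := Subtype.ext (fo_pD D p hpidem hprange x)
    change B x = Y (q (D x))
    rw [this]
    exact (LinearMap.extendOfNorm_eq he ⟨1, hb⟩ x).symm
  · ext x
    change Y (q (p x)) = Y (q x)
    congr 1
    exact Subtype.ext (congrArg (fun f : H →L[ℂ] H => f x) hpidem)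

theorem fo_exists {H : Type*} [NormedAddCommGroup H] [InnerProductSpace ℂ H]
    [CompleteSpace H] (T₁ T₂ D p : H →L[ℂ] H)
    (hT₁ : ‖T₁‖ ≤ 1) (hT₂ : ‖T₂‖ ≤ 1) (hcomm : T₁ * T₂ = T₂ * T₁)
    (hDadj : adjoint D = D) (hDsq : D * D = 1 - adjoint (T₁ * T₂) * (T₁ * T₂))
    (hpadj : adjoint p = p) (hpidem : p * p = p)
    (hprange : Set.range p = closure (Set.range D)) :
    ∃ F : H →L[ℂ] H, ‖F‖ ≤ 1 ∧ F = p * F * p ∧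
      T₁ - adjoint T₂ * (T₁ * T₂) = D * F * D := by
  have key : ∀ (S R : H →L[ℂ] H), adjoint S * S = 1 - adjoint R * R →
      ∀ x, ‖S x‖ ^ 2 = ‖x‖ ^ 2 - ‖R x‖ ^ 2 := by
    intro S R h x
    have h1 := congrArg (fun f : H →L[ℂ] H => (inner ℂ (f x) x).re) h
    simp only [mul_apply_eq_comp, sub_apply, one_apply_eq_self, adjoint_inner_left, inner_sub_left, Complex.sub_re] at h1
    have h3 : ∀ y : H, (inner ℂ y y).re = ‖y‖ ^ 2 := fun y => by
      have := inner_self_eq_norm_sq (𝕜 := ℂ) y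
      simpa using this
    simpa only [h3] using h1
  obtain ⟨S, hS⟩ : ∃ S : H →L[ℂ] H, adjoint S * S = 1 - adjoint T₂ * T₂ := by
    have h0 : 0 ≤ 1 - adjoint T₂ * T₂ := by
      rw [sub_nonneg]
      have : ‖star T₂ * T₂‖ ≤ 1 := by
        rw [CStarRing.norm_star_mul_self]
        nlinarith [norm_nonneg T₂]
      exact (CStarAlgebra.norm_le_one_iff_of_nonneg _ (star_mul_self_nonneg T₂)).1 this
    obtain ⟨S, hS⟩ := CStarAlgebra.nonneg_iff_eq_star_mul_self.1 h0
    exact ⟨S, hS.symm⟩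
  have hD := key D (T₁ * T₂) (by rw [hDadj, hDsq])
  have hSn := key S T₂ hS
  have c1 : ∀ x, ‖T₁ x‖ ≤ ‖x‖ := fun x => by simpa using T₁.le_of_opNorm_le hT₁ x
  obtain ⟨X, hX, hXD, hXp⟩ := fo_douglas D p (S * T₁) hpadj hpidem hprange (fun x => by
    refine (sq_le_sq₀ (norm_nonneg _) (norm_nonneg _)).1 ?_
    rw [hD, hcomm]
    change ‖S (T₁ x)‖ ^ 2 ≤ ‖x‖ ^ 2 - ‖T₂ (T₁ x)‖ ^ 2
    rw [hSn]
    have := c1 x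
    gcongr)
  obtain ⟨Y, hY, hYD, hYp⟩ := fo_douglas D p S hpadj hpidem hprange (fun x => by
    refine (sq_le_sq₀ (norm_nonneg _) (norm_nonneg _)).1 ?_
    rw [hD]
    change ‖S x‖ ^ 2 ≤ ‖x‖ ^ 2 - ‖T₁ (T₂ x)‖ ^ 2
    rw [hSn]
    have := c1 (T₂ x)
    gcongr)
  have hpY : p * adjoint Y = adjoint Y := by
    have := congrArg star hYp
    rw [star_mul] at this
    simpa only [star_eq_adjoint, hpadj] using this
  refine ⟨adjoint Y * X, ?_, ?_, ?_⟩
  · calc ‖adjoint Y * X‖ ≤ ‖adjoint Y‖ * ‖X‖ := norm_mul_le _ _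
      _ ≤ 1 * 1 := by
        gcongr
        rwa [LinearIsometryEquiv.norm_map]
      _ = 1 := one_mul 1
  · rw [← mul_assoc, hpY, mul_assoc, hXp]
  · have hSa : adjoint S = D * adjoint Y := by
      have := congrArg star hYD
      rw [star_mul] at this
      simpa only [star_eq_adjoint, hDadj] using this
    calc T₁ - adjoint T₂ * (T₁ * T₂) = (1 - adjoint T₂ * T₂) * T₁ := by
          rw [hcomm, sub_mul, one_mul, mul_assoc]
      _ = adjoint S * (S * T₁) := by rw [← hS, mul_assoc]
      _ = D * (adjoint Y * X) * D := by rw [hXD, hSa]; simp only [mul_assoc]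




/-- **Fundamental operators.** Let `T₁, T₂` be commuting contractions, `T = T₁T₂`, `D` the
defect operator of `T` (positive square root of `I - T*T`), and `p` the orthogonal projection
onto `𝒟_T = closure (range D)`.  Then there exist unique contractions `F₁, F₂` supported on
`𝒟_T` (i.e. `Fᵢ = p Fᵢ p`) with `T₁ - T₂* T = D F₁ D` and `T₂ - T₁* T = D F₂ D`. -/
theorem fundamental_operators {H : Type*} [NormedAddCommGroup H] [InnerProductSpace ℂ H]
    [CompleteSpace H] (T₁ T₂ D p : H →L[ℂ] H)
    (hT₁ : ‖T₁‖ ≤ 1) (hT₂ : ‖T₂‖ ≤ 1) (hcomm : T₁ * T₂ = T₂ * T₁)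
    (hDpos : D.IsPositive) (hDsq : D * D = 1 - adjoint (T₁ * T₂) * (T₁ * T₂))
    (hpadj : adjoint p = p) (hpidem : p * p = p)
    (hprange : Set.range p = closure (Set.range D)) :
    (∃ F₁ F₂ : H →L[ℂ] H, ‖F₁‖ ≤ 1 ∧ ‖F₂‖ ≤ 1 ∧ F₁ = p * F₁ * p ∧ F₂ = p * F₂ * p ∧
      T₁ - adjoint T₂ * (T₁ * T₂) = D * F₁ * D ∧
      T₂ - adjoint T₁ * (T₁ * T₂) = D * F₂ * D) ∧
    (∀ F F' : H →L[ℂ] H, F = p * F * p → F' = p * F' * p →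
      D * F * D = D * F' * D → F = F') := by
  have hDadj : adjoint D = D := hDpos.isSelfAdjoint.adjoint_eq
  refine ⟨?_, ?_⟩
  · obtain ⟨F₁, a1, a2, a3⟩ := fo_exists T₁ T₂ D p hT₁ hT₂ hcomm hDadj hDsq hpadj hpidem hprange
    obtain ⟨F₂, b1, b2, b3⟩ := fo_exists T₂ T₁ D p hT₂ hT₁ hcomm.symm hDadj
      (by rw [← hcomm]; exact hDsq) hpadj hpidem hprange
    exact ⟨F₁, F₂, a1, b1, a2, b2, a3, by rw [← b3, hcomm]⟩
  · intro F F' hF hF' h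
    have hG : F - F' = p * (F - F') * p := by
      rw [mul_sub, sub_mul, ← hF, ← hF']
    have hGp : (F - F') * p = F - F' := by
      rw [hG, mul_assoc, hpidem]
    have hpG : p * (F - F') = F - F' := by
      rw [hG, ← mul_assoc, ← mul_assoc, hpidem]
    have h1 : D * (F - F') * D = 0 := by rw [mul_sub, sub_mul, h, sub_self]
    have h2 := fo_eq_zero D p _ hprange h1
    rw [mul_assoc, hGp] at h2
    have h3 : star (F - F') * D = 0 := by
      have := congrArg star h2
      rw [star_mul, star_zero] at this
      simpa only [star_eq_adjoint, hDadj] using this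
    have h4 := fo_eq_zero D p _ hprange h3
    have h5 := congrArg star h4
    rw [star_mul, star_zero, star_star, star_eq_adjoint p, hpadj, hpG] at h5
    exact sub_eq_zero.1 h5
end

section
/- Let T₁ and T₂ be commuting contractions on a complex Hilbert space H and T = T₁T₂. Then there exist a complex Hilbert space K, a linear isometry Π : H → K, contractions W₁, W₂ on K, and an isometry W on K such that: Π ∘ T₁* = W₁* ∘ Π, Π ∘ T₂* = W₂* ∘ Π, Π ∘ T* = W* ∘ Π; W is a minimal isometric dilation of T, i.e. K equals the closed linear span of { Wⁿ(Πh) : n ∈ ℕ, h ∈ H }; W₁W = WW₁ and W₂W = WW₂; and W₁ = W₂*W. -/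
open ContinuousLinearMap

universe u

namespace AndoAux

theorem mulA {E : Type u} [NormedAddCommGroup E] [InnerProductSpace ℂ E] (A B : E →L[ℂ] E)
    (x : E) : (A * B) x = A (B x) := rfl

theorem oneA {E : Type u} [NormedAddCommGroup E] [InnerProductSpace ℂ E]
    (x : E) : (1 : E →L[ℂ] E) x = x := rfl

/-- A defect operator of a contraction. -/
theorem exists_defect {H : Type u} [NormedAddCommGroup H] [InnerProductSpace ℂ H]
    [CompleteSpace H] (T : H →L[ℂ] H) (hT : ‖T‖ ≤ 1) :
    ∃ D : H →L[ℂ] H, ∀ h k, inner ℂ (D h) (D k) = inner ℂ h k - inner ℂ (T h) (T k) := by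
  have hpos : (0 : H →L[ℂ] H) ≤ 1 - adjoint T * T := by
    rw [ContinuousLinearMap.nonneg_iff_isPositive, ContinuousLinearMap.isPositive_def']
    refine ⟨?_, fun x => ?_⟩
    · rw [← star_eq_adjoint]
      exact (IsSelfAdjoint.one _).sub (IsSelfAdjoint.star_mul_self T)
    · have h1 : ‖T x‖ ≤ ‖x‖ := by
        simpa using T.le_of_opNorm_le hT x
      have h2 : ‖T x‖ ^ 2 ≤ ‖x‖ ^ 2 := by gcongr
      rw [reApplyInnerSelf_apply]
      simp only [sub_apply, oneA, mulA, inner_sub_left, adjoint_inner_left, map_sub]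
      rw [inner_self_eq_norm_sq, inner_self_eq_norm_sq]
      linarith
  obtain ⟨D, hD⟩ := CStarAlgebra.nonneg_iff_eq_star_mul_self.mp hpos
  refine ⟨D, fun h k => ?_⟩
  have : (adjoint D * D) k = k - adjoint T (T k) := by
    rw [← star_eq_adjoint D, ← hD]; simp
  rw [← adjoint_inner_right, ← adjoint_inner_right, ← inner_sub_right, ← this]
  rfl

/-- A unitary involution interchanging two orthogonal copies. -/
theorem exists_swap {H E : Type u} [NormedAddCommGroup H] [InnerProductSpace ℂ H]
    [NormedAddCommGroup E] [InnerProductSpace ℂ E] [CompleteSpace E]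
    (a b : H →ₗ[ℂ] E) (hab : ∀ h k, inner ℂ (a h) (b k) = 0)
    (hn : ∀ h k, inner ℂ (a h) (a k) = inner ℂ (b h) (b k)) :
    ∃ G : E ≃ₗᵢ[ℂ] E, (∀ x, G (G x) = x) ∧ ∀ h, G (a h) = b h := by
  have hba : ∀ h k, inner ℂ (b h) (a k) = 0 := fun h k => by
    rw [← inner_conj_symm, hab, map_zero]
  let N : Submodule ℂ E := (LinearMap.range (a - b)).topologicalClosure
  refine ⟨Nᗮ.reflection, fun x => Nᗮ.reflection_reflection x, fun h => ?_⟩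
  have h1 : Nᗮ.reflection (a h - b h) = - (a h - b h) :=
    Submodule.reflection_mem_subspace_orthogonal_precomplement_eq_neg
      (Submodule.le_topologicalClosure _ ⟨h, rfl⟩)
  have h2 : Nᗮ.reflection (a h + b h) = a h + b h := by
    apply Submodule.reflection_mem_subspace_eq_self
    rw [Submodule.orthogonal_closure, Submodule.mem_orthogonal]
    rintro _ ⟨k, rfl⟩
    simp [inner_sub_left, inner_add_right, hab, hba, hn]
  have h3 : a h = (2⁻¹ : ℂ) • ((a h + b h) + (a h - b h)) := by module
  rw [h3, map_smul, map_add, h1, h2]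
  module

section Step

variable {H F : Type u} [NormedAddCommGroup H] [InnerProductSpace ℂ H]
    [NormedAddCommGroup F] [InnerProductSpace ℂ F]

/-- Coefficient space. -/
abbrev EE (F : Type u) [NormedAddCommGroup F] : Type u := WithLp 2 (F × F)

/-- Square summable sequences. -/
abbrev MM (F : Type u) [NormedAddCommGroup F] : Type u := lp (fun _ : ℕ => EE F) 2

/-- Ambient space of the dilation. -/
abbrev LL (H F : Type u) [NormedAddCommGroup H] [NormedAddCommGroup F] : Type u :=
  WithLp 2 (H × MM F)

/-- The shifted sequence. -/
noncomputable def stepSeq (G₁ G₂ : EE F ≃ₗᵢ[ℂ] EE F) (d : H →ₗ[ℂ] F) (h : H) (e : ℕ → EE F) : ℕ → EE F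
  | 0 => G₁ (WithLp.toLp 2 (d h, (G₂ (e 0)).fst))
  | n + 1 => G₁ (WithLp.toLp 2 ((G₂ (e n)).snd, (G₂ (e (n + 1))).fst))

theorem stepSeq_add (G₁ G₂ : EE F ≃ₗᵢ[ℂ] EE F) (d : H →ₗ[ℂ] F) (h k : H) (e f : ℕ → EE F)
    (n : ℕ) : stepSeq G₁ G₂ d (h + k) (e + f) n =
      stepSeq G₁ G₂ d h e n + stepSeq G₁ G₂ d k f n := by
  cases n <;> (simp only [stepSeq]; rw [← map_add G₁, ← WithLp.toLp_add, Prod.mk_add_mk]; simp)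

theorem stepSeq_smul (G₁ G₂ : EE F ≃ₗᵢ[ℂ] EE F) (d : H →ₗ[ℂ] F) (c : ℂ) (h : H) (e : ℕ → EE F)
    (n : ℕ) : stepSeq G₁ G₂ d (c • h) (c • e) n = c • stepSeq G₁ G₂ d h e n := by
  cases n <;> (simp only [stepSeq]; rw [← map_smul G₁, ← WithLp.toLp_smul, Prod.smul_mk]; simp)

theorem hasSum_mm (e : MM F) : HasSum (fun n => ‖e n‖ ^ 2) (‖e‖ ^ 2) := by
  have := lp.hasSum_norm (p := 2) (by norm_num) e
  simpa using this

theorem hasSum_stepSeq (G₁ G₂ : EE F ≃ₗᵢ[ℂ] EE F) (d : H →ₗ[ℂ] F) (h : H) (e : MM F) :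
    HasSum (fun n => ‖stepSeq G₁ G₂ d h e n‖ ^ 2) (‖d h‖ ^ 2 + ‖e‖ ^ 2) := by
  have he : HasSum (fun n => ‖(G₂ (e n)).fst‖ ^ 2 + ‖(G₂ (e n)).snd‖ ^ 2) (‖e‖ ^ 2) := by
    have := hasSum_mm e
    refine this.congr_fun ?_ |> fun h => h
    intro n
    rw [← WithLp.prod_norm_sq_eq_of_L2, LinearIsometryEquiv.norm_map]
  have hp : Summable (fun n => ‖(G₂ (e n)).fst‖ ^ 2) :=
    he.summable.of_nonneg_of_le (fun n => by positivity)
      (fun n => le_add_of_nonneg_right (by positivity))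
  have hq : Summable (fun n => ‖(G₂ (e n)).snd‖ ^ 2) :=
    he.summable.of_nonneg_of_le (fun n => by positivity)
      (fun n => le_add_of_nonneg_left (by positivity))
  obtain ⟨P, hP⟩ := hp
  obtain ⟨Q, hQ⟩ := hq
  have hPQ : P + Q = ‖e‖ ^ 2 := (hP.add hQ).unique he
  let q' : ℕ → ℝ := fun n => Nat.casesOn n (‖d h‖ ^ 2) (fun m => ‖(G₂ (e m)).snd‖ ^ 2)
  have hq' : HasSum q' (Q + ‖d h‖ ^ 2) := by
    have := (hasSum_nat_add_iff (f := q') (g := Q) 1).1 hQ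
    simpa [q'] using this
  have hsum := hq'.add hP
  have : ‖d h‖ ^ 2 + ‖e‖ ^ 2 = Q + ‖d h‖ ^ 2 + P := by rw [← hPQ]; ring
  rw [this]
  convert hsum using 2 with n
  cases n <;> simp [stepSeq, q', WithLp.prod_norm_sq_eq_of_L2]

theorem exists_step (G₁ G₂ : EE F ≃ₗᵢ[ℂ] EE F) (d : H →ₗ[ℂ] F) (T : H →L[ℂ] H)
    (hd : ∀ h, ‖T h‖ ^ 2 + ‖d h‖ ^ 2 = ‖h‖ ^ 2) :
    ∃ V : LL H F →ₗᵢ[ℂ] LL H F, ∀ x, (V x).fst = T x.fst ∧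
      ∀ n, (V x).snd n = stepSeq G₁ G₂ d x.fst x.snd n := by
  have hmem : ∀ x : LL H F, Memℓp (stepSeq G₁ G₂ d x.fst x.snd) 2 := by
    intro x
    rw [memℓp_gen_iff (by norm_num)]
    simpa using (hasSum_stepSeq G₁ G₂ d x.fst x.snd).summable
  let V₀ : LL H F →ₗ[ℂ] LL H F :=
    { toFun := fun x => WithLp.toLp 2 (T x.fst, (⟨stepSeq G₁ G₂ d x.fst x.snd, hmem x⟩ : MM F))
      map_add' := by
        intro x y
        rw [← WithLp.toLp_add, Prod.mk_add_mk]
        congr 2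
        · simp
        · apply lp.ext
          funext n
          exact stepSeq_add G₁ G₂ d x.fst y.fst x.snd y.snd n
      map_smul' := by
        intro c x
        rw [RingHom.id_apply, ← WithLp.toLp_smul, Prod.smul_mk]
        congr 2
        · simp
        · apply lp.ext
          funext n
          exact stepSeq_smul G₁ G₂ d c x.fst x.snd n }
  refine ⟨⟨V₀, fun x => ?_⟩, fun x => ⟨rfl, fun n => rfl⟩⟩
  rw [← sq_eq_sq₀ (by positivity) (by positivity), WithLp.prod_norm_sq_eq_of_L2,
    WithLp.prod_norm_sq_eq_of_L2]
  have h1 := (hasSum_mm (V₀ x).snd).unique (hasSum_stepSeq G₁ G₂ d x.fst x.snd)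
  rw [h1, ← hd x.fst]
  change ‖T x.fst‖ ^ 2 + _ = _
  ring

end Step

/-- The defect space. -/
abbrev FF (H : Type u) [NormedAddCommGroup H] : Type u := WithLp 2 (H × H)

/-- The theorem of Ando, in coextension form. -/
theorem ando {H : Type u} [NormedAddCommGroup H]
    [InnerProductSpace ℂ H] [CompleteSpace H] (T₁ T₂ : H →L[ℂ] H)
    (hT₁ : ‖T₁‖ ≤ 1) (hT₂ : ‖T₂‖ ≤ 1) (hcomm : T₁ * T₂ = T₂ * T₁) :
    ∃ (L : Type u) (_ : NormedAddCommGroup L) (_ : InnerProductSpace ℂ L) (_ : CompleteSpace L)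
      (J : H →ₗᵢ[ℂ] L) (V₁ V₂ : L →ₗᵢ[ℂ] L), (∀ x, V₁ (V₂ x) = V₂ (V₁ x)) ∧
      (∀ h x, inner ℂ (J h) (V₁ x) = inner ℂ (J (adjoint T₁ h)) x) ∧
      (∀ h x, inner ℂ (J h) (V₂ x) = inner ℂ (J (adjoint T₂ h)) x) := by
  obtain ⟨D₁, hD₁⟩ := exists_defect T₁ hT₁
  obtain ⟨D₂, hD₂⟩ := exists_defect T₂ hT₂
  have hc : ∀ h, T₁ (T₂ h) = T₂ (T₁ h) := fun h => congrArg (fun S : H →L[ℂ] H => S h) hcomm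
  let ef : (H × H) →ₗ[ℂ] FF H := (WithLp.linearEquiv 2 ℂ (H × H)).symm.toLinearMap
  let ee : (FF H × FF H) →ₗ[ℂ] EE (FF H) := (WithLp.linearEquiv 2 ℂ (FF H × FF H)).symm.toLinearMap
  let d₁ : H →ₗ[ℂ] FF H := ef ∘ₗ (D₁ : H →ₗ[ℂ] H).prod 0
  let d₂ : H →ₗ[ℂ] FF H := ef ∘ₗ LinearMap.prod 0 (D₂ : H →ₗ[ℂ] H)
  let a : H →ₗ[ℂ] EE (FF H) := ee ∘ₗ (d₁ ∘ₗ (T₂ : H →ₗ[ℂ] H)).prod d₂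
  let b : H →ₗ[ℂ] EE (FF H) := ee ∘ₗ (d₂ ∘ₗ (T₁ : H →ₗ[ℂ] H)).prod d₁
  obtain ⟨G, hGG, hG⟩ := exists_swap a b
    (by intro h k; simp [a, b, d₁, d₂, ee, ef])
    (by intro h k; simp [a, b, d₁, d₂, ee, ef, hD₁, hD₂, hc])
  have key : ∀ (T D : H →L[ℂ] H), (∀ h k, inner ℂ (D h) (D k) = inner ℂ h k - inner ℂ (T h) (T k))
      → ∀ h, ‖T h‖ ^ 2 + ‖D h‖ ^ 2 = ‖h‖ ^ 2 := by
    intro T D hD h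
    have := congrArg Complex.re (hD h h)
    rw [Complex.sub_re] at this
    have e : ∀ x : H, (inner ℂ x x).re = ‖x‖ ^ 2 := fun x => inner_self_eq_norm_sq (𝕜 := ℂ) x
    rw [e, e, e] at this
    linarith
  obtain ⟨V₁, hV₁⟩ := exists_step G (LinearIsometryEquiv.refl ℂ _) d₁ T₁ (by
    intro h; rw [← key T₁ D₁ hD₁ h]; simp [d₁, ef, WithLp.prod_norm_sq_eq_of_L2])
  obtain ⟨V₂, hV₂⟩ := exists_step (LinearIsometryEquiv.refl ℂ _) G d₂ T₂ (by
    intro h; rw [← key T₂ D₂ hD₂ h]; simp [d₂, ef, WithLp.prod_norm_sq_eq_of_L2])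
  let J : H →ₗᵢ[ℂ] LL H (FF H) :=
    ⟨(WithLp.linearEquiv 2 ℂ (H × MM (FF H))).symm.toLinearMap ∘ₗ LinearMap.inl ℂ H (MM (FF H)), by
      intro h
      rw [← sq_eq_sq₀ (by positivity) (by positivity), WithLp.prod_norm_sq_eq_of_L2]
      simp⟩
  have hJ : ∀ h (x : LL H (FF H)), inner ℂ (J h) x = inner ℂ h x.fst := by
    intro h x
    rw [WithLp.prod_inner_apply]
    simp [J]
  refine ⟨LL H (FF H), inferInstance, inferInstance, inferInstance, J, V₁, V₂, ?_, ?_, ?_⟩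
  · intro x
    apply WithLp.ofLp_injective
    refine Prod.ext ?_ (lp.ext (funext fun n => ?_))
    · change (V₁ (V₂ x)).fst = (V₂ (V₁ x)).fst
      rw [(hV₁ _).1, (hV₂ _).1, (hV₂ _).1, (hV₁ _).1, hc]
    · change (V₁ (V₂ x)).snd n = (V₂ (V₁ x)).snd n
      rw [(hV₁ _).2, (hV₂ _).2]
      cases n with
      | zero =>
        simp only [stepSeq, (hV₁ _).2, (hV₂ _).2, (hV₁ _).1, (hV₂ _).1, hGG,
          LinearIsometryEquiv.coe_refl, id_eq]
        exact hG x.fst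
      | succ n =>
        have e1 : ∀ m, G (G (x.snd m)) = x.snd m := fun m => hGG _
        cases n with
        | zero => simp only [stepSeq, (hV₁ _).2, (hV₂ _).2, hGG, LinearIsometryEquiv.coe_refl, id_eq]; exact hGG _
        | succ n => simp only [stepSeq, (hV₁ _).2, (hV₂ _).2, hGG, LinearIsometryEquiv.coe_refl, id_eq]; exact hGG _
  · intro h x
    rw [hJ, hJ, (hV₁ x).1, adjoint_inner_left]
  · intro h x
    rw [hJ, hJ, (hV₂ x).1, adjoint_inner_left]

end AndoAux

/-- For commuting contractions `T₁, T₂` with `T = T₁T₂` there exist a Hilbert space `K`, a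
linear isometry `Π : H → K`, contractions `W₁, W₂` and an isometry `W` on `K` such that
`Π Tᵢ* = Wᵢ* Π`, `Π T* = W* Π`, `W` is a minimal isometric dilation of `T`,
`WᵢW = WWᵢ`, and `W₁ = W₂* W`. -/
theorem exists_special_dilation_tuple {H : Type u} [NormedAddCommGroup H]
    [InnerProductSpace ℂ H] [CompleteSpace H] (T₁ T₂ : H →L[ℂ] H)
    (hT₁ : ‖T₁‖ ≤ 1) (hT₂ : ‖T₂‖ ≤ 1) (hcomm : T₁ * T₂ = T₂ * T₁) :
    ∃ (K : Type u) (_ : NormedAddCommGroup K) (_ : InnerProductSpace ℂ K) (_ : CompleteSpace K)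
      (Pi : H →ₗᵢ[ℂ] K) (W₁ W₂ W : K →L[ℂ] K),
        ‖W₁‖ ≤ 1 ∧ ‖W₂‖ ≤ 1 ∧ adjoint W * W = 1 ∧
        (∀ h : H, Pi (adjoint T₁ h) = adjoint W₁ (Pi h)) ∧
        (∀ h : H, Pi (adjoint T₂ h) = adjoint W₂ (Pi h)) ∧
        (∀ h : H, Pi (adjoint (T₁ * T₂) h) = adjoint W (Pi h)) ∧
        (Submodule.span ℂ
            {x : K | ∃ (n : ℕ) (h : H), x = (W ^ n) (Pi h)}).topologicalClosure = ⊤ ∧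
        W₁ * W = W * W₁ ∧ W₂ * W = W * W₂ ∧
        W₁ = adjoint W₂ * W := by
  obtain ⟨L, _, _, _, J, V₁, V₂, hV, hJ₁, hJ₂⟩ := AndoAux.ando T₁ T₂ hT₁ hT₂ hcomm
  let A₁ : L →L[ℂ] L := V₁.toContinuousLinearMap
  let A₂ : L →L[ℂ] L := V₂.toContinuousLinearMap
  let V : L →L[ℂ] L := A₁ * A₂
  have hA : A₁ * A₂ = A₂ * A₁ := by ext x; exact hV x
  have hA₂ : adjoint A₂ * A₂ = 1 := (norm_map_iff_adjoint_comp_self A₂).1 V₂.norm_map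
  have hVV : adjoint V * V = 1 := (norm_map_iff_adjoint_comp_self V).1
    (fun x => (V₁.norm_map _).trans (V₂.norm_map x))
  have hVV' : ∀ x, adjoint V (V x) = x := fun x => congrArg (fun S : L →L[ℂ] L => S x) hVV
  have a₁ : ∀ h, adjoint A₁ (J h) = J (adjoint T₁ h) := fun h =>
    ext_inner_right ℂ fun x => by rw [adjoint_inner_left]; exact hJ₁ h x
  have a₂ : ∀ h, adjoint A₂ (J h) = J (adjoint T₂ h) := fun h =>
    ext_inner_right ℂ fun x => by rw [adjoint_inner_left]; exact hJ₂ h x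
  have hTadj : ∀ h, adjoint (T₁ * T₂) h = adjoint T₂ (adjoint T₁ h) := fun h => by
    rw [← star_eq_adjoint, star_mul]; rfl
  have hVadj : ∀ x, adjoint V x = adjoint A₂ (adjoint A₁ x) := fun h => by
    rw [← star_eq_adjoint, star_mul]; rfl
  have aV : ∀ h, adjoint V (J h) = J (adjoint (T₁ * T₂) h) := fun h => by
    rw [hVadj, a₁, a₂, hTadj]
  let S : Submodule ℂ L := Submodule.span ℂ {x : L | ∃ (n : ℕ) (h : H), x = (V ^ n) (J h)}
  let K : Submodule ℂ L := S.topologicalClosure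
  have inv : ∀ B : L →L[ℂ] L, (∀ n h, B ((V ^ n) (J h)) ∈ S) → ∀ x ∈ K, B x ∈ K := by
    intro B hB
    have h1 : S ≤ K.comap (B : L →ₗ[ℂ] L) := by
      refine Submodule.span_le.2 ?_
      rintro _ ⟨n, h, rfl⟩
      exact S.le_topologicalClosure (hB n h)
    exact Submodule.topologicalClosure_minimal _ h1
      (S.isClosed_topologicalClosure.preimage B.continuous)
  have gen : ∀ n h, (V ^ n) (J h) ∈ S := fun n h => Submodule.subset_span ⟨n, h, rfl⟩
  have invV : ∀ x ∈ K, V x ∈ K := inv V fun n h => by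
    have := gen (n + 1) h
    rwa [pow_succ'] at this
  have invV' : ∀ x ∈ K, adjoint V x ∈ K := inv (adjoint V) fun n h => by
    cases n with
    | zero =>
      have := gen 0 (adjoint (T₁ * T₂) h)
      rw [pow_zero, AndoAux.oneA, ← aV] at this
      simpa using this
    | succ n =>
      rw [pow_succ', AndoAux.mulA, hVV']
      exact gen n h
  have hJK : ∀ h, J h ∈ K := fun h => S.le_topologicalClosure (by simpa using gen 0 h)
  let I : K →L[ℂ] L := K.subtypeL
  let P : L →L[ℂ] K := adjoint I
  have hP : ∀ x, ∀ y : K, inner ℂ (P x) y = inner ℂ x (y : L) := fun x y =>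
    adjoint_inner_left I y x
  have hPI : ∀ x : L, ∀ hx : x ∈ K, P x = ⟨x, hx⟩ := fun x hx =>
    ext_inner_right ℂ fun y => by rw [hP]; rfl
  have hIn : ‖I‖ ≤ 1 := K.norm_subtypeL_le
  have hPn : ‖P‖ ≤ 1 := by rw [LinearIsometryEquiv.norm_map]; exact hIn
  have comp_adj : ∀ B : L →L[ℂ] L, adjoint (P ∘L B ∘L I) = P ∘L adjoint B ∘L I := fun B => by
    simp only [adjoint_comp, P, adjoint_adjoint, comp_assoc]
  have comp_norm : ∀ B : L →L[ℂ] L, ‖B‖ ≤ 1 → ‖P ∘L B ∘L I‖ ≤ 1 := fun B hB =>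
    (opNorm_comp_le _ _).trans (mul_le_one₀ hPn (norm_nonneg _)
      ((opNorm_comp_le _ _).trans (mul_le_one₀ hB (norm_nonneg _) hIn)))
  have hPV : ∀ x, P (V x) = ⟨V (P x), invV _ (P x).2⟩ := fun x =>
    ext_inner_right ℂ fun y => by
      rw [hP, ← adjoint_inner_right]
      have := hP x ⟨adjoint V y, invV' _ y.2⟩
      rw [← this]
      change inner ℂ ((P x : K) : L) (adjoint V (y : L)) = inner ℂ (V (P x)) (y : L)
      rw [adjoint_inner_right]
  have hWx : ∀ x : K, (P ∘L V ∘L I) x = ⟨V x, invV _ x.2⟩ := fun x => hPI _ _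
  have hcV : ∀ B : L →L[ℂ] L, (∀ x, B (V x) = V (B x)) →
      (P ∘L B ∘L I) * (P ∘L V ∘L I) = (P ∘L V ∘L I) * (P ∘L B ∘L I) := by
    intro B hB
    ext1 x
    rw [AndoAux.mulA, AndoAux.mulA, hWx, hWx]
    change P (B (V x)) = _
    rw [hB, hPV]
    rfl
  refine ⟨K, inferInstance, inferInstance, inferInstance,
    ⟨(J.toLinearMap).codRestrict K hJK, fun h => J.norm_map h⟩,
    P ∘L A₁ ∘L I, P ∘L A₂ ∘L I, P ∘L V ∘L I, comp_norm _ V₁.norm_toContinuousLinearMap_le,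
    comp_norm _ V₂.norm_toContinuousLinearMap_le, ?_, ?_, ?_, ?_, ?_, ?_, ?_, ?_⟩
  · rw [comp_adj]
    ext1 x
    rw [AndoAux.mulA, hWx]
    change P (adjoint V (V x)) = x
    rw [hVV']
    exact hPI _ x.2
  · intro h
    rw [comp_adj]
    change _ = P (adjoint A₁ (J h))
    rw [a₁]
    exact (hPI _ _).symm
  · intro h
    rw [comp_adj]
    change _ = P (adjoint A₂ (J h))
    rw [a₂]
    exact (hPI _ _).symm
  · intro h
    rw [comp_adj]
    change _ = P (adjoint V (J h))
    rw [aV]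
    exact (hPI _ _).symm
  · rw [Submodule.topologicalClosure_eq_top_iff, Submodule.eq_bot_iff]
    intro x hx
    have hpow : ∀ (n : ℕ) (y : K), (((P ∘L V ∘L I) ^ n) y : K) = (V ^ n) (y : L) := by
      intro n
      induction n with
      | zero => intro y; simp
      | succ n ih => intro y; rw [pow_succ', pow_succ', AndoAux.mulA, AndoAux.mulA, hWx, ← ih]
    have hS : S ≤ (ℂ ∙ (x : L))ᗮ := by
      refine Submodule.span_le.2 ?_
      rintro _ ⟨n, h, rfl⟩
      rw [SetLike.mem_coe, Submodule.mem_orthogonal_singleton_iff_inner_left]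
      have := (Submodule.mem_orthogonal _ _).1 hx _ (Submodule.subset_span ⟨n, h, rfl⟩)
      rw [Submodule.coe_inner, hpow] at this
      exact this
    have hK := Submodule.topologicalClosure_minimal _ hS (Submodule.isClosed_orthogonal _) x.2
    rw [Submodule.mem_orthogonal_singleton_iff_inner_left, inner_self_eq_zero] at hK
    exact Subtype.ext hK
  · exact hcV A₁ fun x => by
      change V₁ (V₁ (V₂ x)) = V₁ (V₂ (V₁ x))
      rw [hV]
  · exact hcV A₂ fun x => by
      change V₂ (V₁ (V₂ x)) = V₁ (V₂ (V₂ x))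
      exact (hV (V₂ x)).symm
  · rw [comp_adj]
    ext1 x
    rw [AndoAux.mulA, hWx]
    change P (A₁ x) = P (adjoint A₂ (V₁ (V₂ x)))
    rw [hV]
    exact congrArg P (congrArg (fun S : L →L[ℂ] L => S (A₁ x)) hA₂).symm
end

section
/- Uniqueness theorem: Let T₁ and T₂ be commuting contractions on a complex Hilbert space H and T = T₁T₂. Suppose (K, Π, W₁, W₂, W) and (K′, Π′, W₁′, W₂′, W′) each consist of: a complex Hilbert space, a linear isometry from H into it, two contractions and an isometry on it, such that Π ∘ T_i* = W_i* ∘ Π for i = 1,2, Π ∘ T* = W* ∘ Π, K is the closed linear span of { Wⁿ(Πh) : n ∈ ℕ, h ∈ H }, W_iW = WW_i for i = 1,2, and W₁ = W₂*W (and the analogous conditions hold for the primed tuple). Then there exists a unitary τ : K → K′ such that τ ∘ Π = Π′, τ ∘ W₁ = W₁′ ∘ τ, τ ∘ W₂ = W₂′ ∘ τ, and τ ∘ W = W′ ∘ τ. -/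
open ContinuousLinearMap

theorem op_mul_app {K : Type*} [NormedAddCommGroup K] [InnerProductSpace ℂ K]
    (A B : K →L[ℂ] K) (x : K) : (A * B) x = A (B x) := rfl

theorem op_one_app {K : Type*} [NormedAddCommGroup K] [InnerProductSpace ℂ K]
    (x : K) : (1 : K →L[ℂ] K) x = x := rfl

/-- Two families with the same Gram matrix and dense spans are unitarily equivalent. -/
theorem gram_unitary {ι : Type*}
    {K : Type*} [NormedAddCommGroup K] [InnerProductSpace ℂ K] [CompleteSpace K]
    {K' : Type*} [NormedAddCommGroup K'] [InnerProductSpace ℂ K'] [CompleteSpace K']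
    (v : ι → K) (v' : ι → K')
    (hv : (Submodule.span ℂ (Set.range v)).topologicalClosure = ⊤)
    (hv' : (Submodule.span ℂ (Set.range v')).topologicalClosure = ⊤)
    (hg : ∀ i j, inner ℂ (v i) (v j) = inner ℂ (v' i) (v' j)) :
    ∃ τ : K ≃ₗᵢ[ℂ] K', ∀ i, τ (v i) = v' i := by
  have d1 : DenseRange (Finsupp.linearCombination ℂ v) := by
    rw [← Finsupp.range_linearCombination, ← Submodule.dense_iff_topologicalClosure_eq_top] at hv
    exact hv
  have d2 : DenseRange (Finsupp.linearCombination ℂ v') := by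
    rw [← Finsupp.range_linearCombination, ← Submodule.dense_iff_topologicalClosure_eq_top] at hv'
    exact hv'
  have hn : ∀ f : ι →₀ ℂ, ‖Finsupp.linearCombination ℂ v' ((LinearEquiv.refl ℂ (ι →₀ ℂ)) f)‖
      = ‖Finsupp.linearCombination ℂ v f‖ := by
    intro f
    have : inner ℂ (Finsupp.linearCombination ℂ v' f) (Finsupp.linearCombination ℂ v' f)
        = inner ℂ (Finsupp.linearCombination ℂ v f) (Finsupp.linearCombination ℂ v f) := by
      simp only [Finsupp.linearCombination_apply, Finsupp.sum, sum_inner, inner_sum,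
        inner_smul_left, inner_smul_right, hg]
    simp only [inner_self_eq_norm_sq_to_K] at this
    have h2 : ‖Finsupp.linearCombination ℂ v' f‖ ^ 2 = ‖Finsupp.linearCombination ℂ v f‖ ^ 2 := by
      exact_mod_cast this
    exact (sq_eq_sq₀ (norm_nonneg _) (norm_nonneg _)).1 h2
  refine ⟨(LinearEquiv.refl ℂ (ι →₀ ℂ)).extendOfIsometry _ _ d1 d2 hn, fun i => ?_⟩
  have := (LinearEquiv.refl ℂ (ι →₀ ℂ)).extendOfIsometry_eq _ _ d1 d2 hn (Finsupp.single i 1)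
  simpa using this

/-- The Gram matrix of the vectors `W ^ n (Pi h)` depends only on the compressed operator. -/
theorem dilation_gram {H : Type*} [NormedAddCommGroup H] [InnerProductSpace ℂ H]
    {K : Type*} [NormedAddCommGroup K] [InnerProductSpace ℂ K] [CompleteSpace K]
    {K' : Type*} [NormedAddCommGroup K'] [InnerProductSpace ℂ K'] [CompleteSpace K']
    (S : H →L[ℂ] H) (P : H →ₗᵢ[ℂ] K) (W : K →L[ℂ] K) (P' : H →ₗᵢ[ℂ] K') (W' : K' →L[ℂ] K')
    (hW : adjoint W * W = 1) (hW' : adjoint W' * W' = 1)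
    (hd : ∀ h : H, P (S h) = adjoint W (P h)) (hd' : ∀ h : H, P' (S h) = adjoint W' (P' h))
    (n m : ℕ) (h k : H) :
    inner ℂ ((W ^ n) (P h)) ((W ^ m) (P k)) = inner ℂ ((W' ^ n) (P' h)) ((W' ^ m) (P' k)) := by
  have e : ∀ x, adjoint W (W x) = x := fun x => DFunLike.congr_fun hW x
  have e' : ∀ x, adjoint W' (W' x) = x := fun x => DFunLike.congr_fun hW' x
  induction n generalizing m h k with
  | zero =>
    induction m generalizing h with
    | zero => simp
    | succ m ih =>
      have := ih (S h)
      simp only [pow_zero, op_one_app, hd, hd', adjoint_inner_left] at this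
      simpa only [pow_zero, pow_succ', op_one_app, op_mul_app] using this
  | succ n ih =>
    cases m with
    | zero =>
      have := ih 0 h (S k)
      simp only [pow_zero, op_one_app, hd, hd', adjoint_inner_right] at this
      simpa only [pow_zero, pow_succ', op_one_app, op_mul_app] using this
    | succ m =>
      simp only [pow_succ', op_mul_app]
      rw [← adjoint_inner_right W, ← adjoint_inner_right W', e, e', ih]

/-- **Uniqueness theorem.** Any two tuples `(K, Π, W₁, W₂, W)` and `(K', Π', W₁', W₂', W')`
dilating the commuting contractions `(T₁, T₂, T₁T₂)` such that `W` (resp. `W'`) is a minimal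
isometric dilation of `T₁T₂`, `WᵢW = WWᵢ`, and `W₁ = W₂*W` (and likewise for the primed
tuple) are unitarily equivalent via a unitary `τ : K → K'` with `τΠ = Π'`, `τWᵢ = Wᵢ'τ`
and `τW = W'τ`. -/
theorem dilation_tuple_unique {H : Type*} [NormedAddCommGroup H] [InnerProductSpace ℂ H]
    [CompleteSpace H]
    {K : Type*} [NormedAddCommGroup K] [InnerProductSpace ℂ K] [CompleteSpace K]
    {K' : Type*} [NormedAddCommGroup K'] [InnerProductSpace ℂ K'] [CompleteSpace K']
    (T₁ T₂ : H →L[ℂ] H) (hT₁ : ‖T₁‖ ≤ 1) (hT₂ : ‖T₂‖ ≤ 1) (hcomm : T₁ * T₂ = T₂ * T₁)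
    (Pi : H →ₗᵢ[ℂ] K) (W₁ W₂ W : K →L[ℂ] K)
    (Pi' : H →ₗᵢ[ℂ] K') (W₁' W₂' W' : K' →L[ℂ] K')
    (hW₁ : ‖W₁‖ ≤ 1) (hW₂ : ‖W₂‖ ≤ 1) (hW : adjoint W * W = 1)
    (hd₁ : ∀ h : H, Pi (adjoint T₁ h) = adjoint W₁ (Pi h))
    (hd₂ : ∀ h : H, Pi (adjoint T₂ h) = adjoint W₂ (Pi h))
    (hd : ∀ h : H, Pi (adjoint (T₁ * T₂) h) = adjoint W (Pi h))
    (hmin : (Submodule.span ℂ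
      {x : K | ∃ (n : ℕ) (h : H), x = (W ^ n) (Pi h)}).topologicalClosure = ⊤)
    (hc₁ : W₁ * W = W * W₁) (hc₂ : W₂ * W = W * W₂) (hprod : W₁ = adjoint W₂ * W)
    (hW₁' : ‖W₁'‖ ≤ 1) (hW₂' : ‖W₂'‖ ≤ 1) (hW' : adjoint W' * W' = 1)
    (hd₁' : ∀ h : H, Pi' (adjoint T₁ h) = adjoint W₁' (Pi' h))
    (hd₂' : ∀ h : H, Pi' (adjoint T₂ h) = adjoint W₂' (Pi' h))
    (hd' : ∀ h : H, Pi' (adjoint (T₁ * T₂) h) = adjoint W' (Pi' h))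
    (hmin' : (Submodule.span ℂ
      {x : K' | ∃ (n : ℕ) (h : H), x = (W' ^ n) (Pi' h)}).topologicalClosure = ⊤)
    (hc₁' : W₁' * W' = W' * W₁') (hc₂' : W₂' * W' = W' * W₂')
    (hprod' : W₁' = adjoint W₂' * W') :
    ∃ τ : K ≃ₗᵢ[ℂ] K',
      (∀ h : H, τ (Pi h) = Pi' h) ∧
      (∀ x : K, τ (W₁ x) = W₁' (τ x)) ∧
      (∀ x : K, τ (W₂ x) = W₂' (τ x)) ∧
      (∀ x : K, τ (W x) = W' (τ x)) := by
  have hr : {x : K | ∃ (n : ℕ) (h : H), x = (W ^ n) (Pi h)}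
      = Set.range (fun p : ℕ × H => (W ^ p.1) (Pi p.2)) := by
    ext x; simp [eq_comm]
  have hr' : {x : K' | ∃ (n : ℕ) (h : H), x = (W' ^ n) (Pi' h)}
      = Set.range (fun p : ℕ × H => (W' ^ p.1) (Pi' p.2)) := by
    ext x; simp [eq_comm]
  obtain ⟨τ, hτ⟩ := gram_unitary (fun p : ℕ × H => (W ^ p.1) (Pi p.2))
    (fun p : ℕ × H => (W' ^ p.1) (Pi' p.2)) (hr ▸ hmin) (hr' ▸ hmin')
    (fun i j => dilation_gram (adjoint (T₁ * T₂)) Pi W Pi' W' hW hW' hd hd' i.1 j.1 i.2 j.2)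
  have hτn : ∀ n h, τ ((W ^ n) (Pi h)) = (W' ^ n) (Pi' h) := fun n h => hτ (n, h)
  have hτ0 : ∀ h, τ (Pi h) = Pi' h := fun h => by simpa using hτn 0 h
  have hdense := (Submodule.dense_iff_topologicalClosure_eq_top).2 hmin
  -- extensionality on the generating vectors
  have hext : ∀ A B : K →L[ℂ] K', (∀ n h, A ((W ^ n) (Pi h)) = B ((W ^ n) (Pi h))) → A = B := by
    intro A B hAB
    refine ContinuousLinearMap.ext_on hdense ?_
    rintro _ ⟨n, h, rfl⟩
    exact hAB n h
  let t : K →L[ℂ] K' := (τ : K ≃L[ℂ] K').toContinuousLinearMap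
  have hτW : ∀ x, τ (W x) = W' (τ x) := by
    have : t.comp W = W'.comp t := by
      refine hext _ _ fun n h => ?_
      change τ (W ((W ^ n) (Pi h))) = W' (τ ((W ^ n) (Pi h)))
      have := hτn (n + 1) h
      rw [hτn]
      simpa only [pow_succ', op_mul_app] using this
    exact fun x => DFunLike.congr_fun this x
  have hτWn : ∀ n x, τ ((W ^ n) x) = (W' ^ n) (τ x) := by
    intro n
    induction n with
    | zero => simp
    | succ n ih => intro x; simp only [pow_succ', op_mul_app, hτW, ih]
  have a1 : adjoint W₁ = adjoint W * W₂ := by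
    rw [hprod]; simp only [← star_eq_adjoint, star_mul, star_star]
  have a1' : adjoint W₁' = adjoint W' * W₂' := by
    rw [hprod']; simp only [← star_eq_adjoint, star_mul, star_star]
  -- the key step
  have key : ∀ h, τ (W₂ (Pi h)) = W₂' (Pi' h) := by
    intro h
    have : (innerSL ℂ (τ (W₂ (Pi h)))).comp t = (innerSL ℂ (W₂' (Pi' h))).comp t := by
      refine ContinuousLinearMap.ext_on hdense ?_
      rintro _ ⟨n, k, rfl⟩
      change inner ℂ (τ (W₂ (Pi h))) (τ ((W ^ n) (Pi k)))
        = inner ℂ (W₂' (Pi' h)) (τ ((W ^ n) (Pi k)))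
      rw [LinearIsometryEquiv.inner_map_map, hτn]
      cases n with
      | zero =>
        simp only [pow_zero, op_one_app]
        rw [← adjoint_inner_right, ← adjoint_inner_right, ← hd₂, ← hd₂']
        simp
      | succ n =>
        simp only [pow_succ', op_mul_app]
        rw [← adjoint_inner_left W, ← adjoint_inner_left W']
        have b : adjoint W (W₂ (Pi h)) = Pi (adjoint T₁ h) := by rw [hd₁, a1]; rfl
        have b' : adjoint W' (W₂' (Pi' h)) = Pi' (adjoint T₁ h) := by rw [hd₁', a1']; rfl
        rw [b, b', ← LinearIsometryEquiv.inner_map_map τ, hτ0, hτn]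
    refine ext_inner_right ℂ fun y => ?_
    have := DFunLike.congr_fun this (τ.symm y)
    simpa [t] using this
  have c2 : ∀ n x, W₂ ((W ^ n) x) = (W ^ n) (W₂ x) := fun n x =>
    DFunLike.congr_fun (Commute.pow_right (show Commute W₂ W from hc₂) n).eq x
  have c2' : ∀ n x, W₂' ((W' ^ n) x) = (W' ^ n) (W₂' x) := fun n x =>
    DFunLike.congr_fun (Commute.pow_right (show Commute W₂' W' from hc₂') n).eq x
  have hτ2 : ∀ x, τ (W₂ x) = W₂' (τ x) := by
    have : t.comp W₂ = W₂'.comp t := by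
      refine hext _ _ fun n h => ?_
      change τ (W₂ ((W ^ n) (Pi h))) = W₂' (τ ((W ^ n) (Pi h)))
      rw [hτn, c2, c2', hτWn, key]
    exact fun x => DFunLike.congr_fun this x
  have hτ2s : ∀ x, τ (adjoint W₂ x) = adjoint W₂' (τ x) := by
    intro x
    refine ext_inner_right ℂ fun y => ?_
    obtain ⟨z, rfl⟩ := τ.surjective y
    rw [LinearIsometryEquiv.inner_map_map, adjoint_inner_left, adjoint_inner_left, ← hτ2,
      LinearIsometryEquiv.inner_map_map]
  refine ⟨τ, hτ0, fun x => ?_, hτ2, hτW⟩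
  rw [hprod, hprod', op_mul_app, op_mul_app, hτ2s, hτW]
end

section
/- Tetrablock von Neumann inequality: Let T₁ and T₂ be commuting contractions on a complex Hilbert space H and T = T₁T₂. Let 𝔼 := { (X₀₀, X₁₁, det X) : X a 2×2 complex matrix with ‖X‖ < 1 }, where ‖X‖ is the operator norm of X acting on the Euclidean space ℂ². Then for every finitely supported family of coefficients c : ℕ×ℕ×ℕ → ℂ, ‖ Σ_{(i,j,k)} c(i,j,k) · T₁^i T₂^j T^k ‖ ≤ sup { | Σ_{(i,j,k)} c(i,j,k) · x₁^i x₂^j x₃^k | : (x₁, x₂, x₃) ∈ closure 𝔼 }. -/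
open ContinuousLinearMap

/-- The inequality for two contractive elements of a commutative C*-algebra (Gelfand theory). -/
theorem vn_comm {B : Type*} [CommCStarAlgebra B] (u v : B)
    (hu : ‖u‖ ≤ 1) (hv : ‖v‖ ≤ 1) (c : (ℕ × ℕ × ℕ) →₀ ℂ) (M : ℝ) (hM0 : 0 ≤ M)
    (hM : ∀ z w : ℂ, ‖z‖ ≤ 1 → ‖w‖ ≤ 1 →
      ‖∑ p ∈ c.support, c p * (z ^ p.1 * w ^ p.2.1 * (z * w) ^ p.2.2)‖ ≤ M) :
    ‖∑ p ∈ c.support, c p • (u ^ p.1 * v ^ p.2.1 * (u * v) ^ p.2.2)‖ ≤ M := by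
  have hiso := (gelfandTransform_isometry B)
  have h0 : WeakDual.gelfandTransform ℂ B 0 = 0 := map_zero _
  have hn := hiso.norm_map_of_map_zero h0
  rw [← hn, ContinuousMap.norm_le _ hM0]
  intro φ
  have hb : ∀ x : B, ‖x‖ ≤ 1 → ‖WeakDual.gelfandTransform ℂ B x φ‖ ≤ 1 := fun x hx =>
    ((WeakDual.gelfandTransform ℂ B x).norm_coe_le_norm φ).trans (by rw [hn]; exact hx)
  have := hM _ _ (hb u hu) (hb v hv)
  simpa using this

/-- Same for elements of a closed commutative star subalgebra. -/
theorem vn_sub {B : Type*} [CStarAlgebra B] (A : StarSubalgebra ℂ B)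
    (hA : IsClosed (A : Set B)) (hcomm : ∀ x y : A, x * y = y * x) (u v : B)
    (hu : ‖u‖ ≤ 1) (hv : ‖v‖ ≤ 1) (huA : u ∈ A) (hvA : v ∈ A)
    (c : (ℕ × ℕ × ℕ) →₀ ℂ) (M : ℝ) (hM0 : 0 ≤ M)
    (hM : ∀ z w : ℂ, ‖z‖ ≤ 1 → ‖w‖ ≤ 1 →
      ‖∑ p ∈ c.support, c p * (z ^ p.1 * w ^ p.2.1 * (z * w) ^ p.2.2)‖ ≤ M) :
    ‖∑ p ∈ c.support, c p • (u ^ p.1 * v ^ p.2.1 * (u * v) ^ p.2.2)‖ ≤ M := by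
  let i1 : CStarAlgebra A := StarSubalgebra.cstarAlgebra A (h_closed := hA)
  let i2 : CommCStarAlgebra A := { i1 with mul_comm := hcomm }
  have := vn_comm (B := A) ⟨u, huA⟩ ⟨v, hvA⟩ hu hv c M hM0 hM
  refine le_trans (le_of_eq ?_) this
  have h2 : ∑ p ∈ c.support, c p • (u ^ p.1 * v ^ p.2.1 * (u * v) ^ p.2.2) =
      A.subtype (∑ p ∈ c.support, c p • ((⟨u, huA⟩ : A) ^ p.1 * (⟨v, hvA⟩ : A) ^ p.2.1 *
        ((⟨u, huA⟩ : A) * ⟨v, hvA⟩) ^ p.2.2)) := by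
    rw [map_sum]
    rfl
  rw [h2]
  rfl

theorem vn_unitaries {B : Type*} [CStarAlgebra B] (u v : B)
    (hu : star u * u = 1) (hu' : u * star u = 1) (hv : star v * v = 1) (hv' : v * star v = 1)
    (huv : u * v = v * u) (c : (ℕ × ℕ × ℕ) →₀ ℂ) (M : ℝ) (hM0 : 0 ≤ M)
    (hM : ∀ z w : ℂ, ‖z‖ ≤ 1 → ‖w‖ ≤ 1 →
      ‖∑ p ∈ c.support, c p * (z ^ p.1 * w ^ p.2.1 * (z * w) ^ p.2.2)‖ ≤ M) :
    ‖∑ p ∈ c.support, c p • (u ^ p.1 * v ^ p.2.1 * (u * v) ^ p.2.2)‖ ≤ M := by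
  have h1 : u * star v = star v * u := by
    calc u * star v = star v * v * u * star v := by rw [hv, one_mul]
      _ = star v * (u * v) * star v := by rw [huv]; simp only [mul_assoc]
      _ = star v * u := by rw [mul_assoc, mul_assoc, hv', mul_one]
  have h2 : v * star u = star u * v := by
    have := congrArg star h1
    simpa using this
  have hc1 : ∀ a ∈ ({u, v} : Set B), ∀ b ∈ ({u, v} : Set B), a * b = b * a := by
    rintro a (rfl | rfl) b (rfl | rfl) <;> first | rfl | exact huv | exact huv.symm
  have hc2 : ∀ a ∈ ({u, v} : Set B), ∀ b ∈ ({u, v} : Set B), a * star b = star b * a := by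
    rintro a (rfl | rfl) b (rfl | rfl)
    · rw [hu, hu']
    · exact h1
    · exact h2
    · rw [hv, hv']
  let A0 := StarAlgebra.adjoin ℂ ({u, v} : Set B)
  have hA0 : ∀ x y : A0, x * y = y * x := fun x y =>
    (StarAlgebra.isMulCommutative_adjoin ℂ hc1 hc2).is_comm.comm x y
  have hA : ∀ x y : A0.topologicalClosure, x * y = y * x := fun x y =>
    (StarSubalgebra.commRingTopologicalClosure A0 hA0).mul_comm x y
  have hsub : ∀ x ∈ ({u, v} : Set B), x ∈ A0.topologicalClosure := fun x hx =>
    A0.le_topologicalClosure (StarAlgebra.subset_adjoin ℂ _ hx)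
  have hnorm : ∀ x : B, star x * x = 1 → ‖x‖ ≤ 1 := by
    intro x hx
    rcases subsingleton_or_nontrivial B with h | h
    · simp [Subsingleton.elim x 0]
    · have := CStarRing.norm_star_mul_self (x := x)
      rw [hx, CStarRing.norm_one] at this
      nlinarith [norm_nonneg x]
  exact vn_sub A0.topologicalClosure A0.isClosed_topologicalClosure hA u v (hnorm u hu) (hnorm v hv)
    (hsub u (by simp)) (hsub v (by simp)) c M hM0 hM

section ell2
variable {G : Type*} [NormedAddCommGroup G]

/-- Bilateral square-summable sequences. -/
abbrev EllTwo (G : Type*) [NormedAddCommGroup G] : Type _ := lp (fun _ : ℤ => G) 2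

theorem memlp_two_iff (f : ℤ → G) :
    Memℓp f 2 ↔ Summable fun n => ‖f n‖ ^ 2 := by
  rw [memℓp_gen_iff (by norm_num)]
  simp

theorem ell_norm_sq (x : EllTwo G) : HasSum (fun n => ‖x n‖ ^ 2) (‖x‖ ^ 2) := by
  have h := lp.hasSum_norm (E := fun _ : ℤ => G) (p := 2) (by norm_num) x
  simpa using h

variable [InnerProductSpace ℂ G]

/-- Pointwise application of an operator. -/
noncomputable def diagOp (A : G →L[ℂ] G) : EllTwo G →L[ℂ] EllTwo G :=
  LinearMap.mkContinuous
    { toFun := fun x => ⟨fun n => A (x n), by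
        refine (memlp_two_iff _).2 ?_
        refine Summable.of_nonneg_of_le (fun n => by positivity) (fun n => ?_)
          ((ell_norm_sq x).summable.mul_left (‖A‖ ^ 2))
        rw [← mul_pow]
        exact pow_le_pow_left₀ (norm_nonneg _) (A.le_opNorm _) 2⟩
      map_add' := fun x y => by ext n; exact A.map_add _ _
      map_smul' := fun c x => by ext n; simp } ‖A‖ (by
    intro x
    refine le_of_sq_le_sq ?_ (by positivity)
    rw [mul_pow]
    refine hasSum_le (fun n => ?_) (ell_norm_sq _) ((ell_norm_sq x).mul_left (‖A‖ ^ 2))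
    rw [← mul_pow]
    exact pow_le_pow_left₀ (norm_nonneg _) (A.le_opNorm _) 2)

@[simp] theorem diagOp_apply (A : G →L[ℂ] G) (x : EllTwo G) (n : ℤ) :
    diagOp A x n = A (x n) := rfl

theorem shift_hasSum (k : ℤ) (f : ℤ → ℝ) (s : ℝ) (h : HasSum f s) :
    HasSum (fun n => f (n + k)) s :=
  (Equiv.addRight k).hasSum_iff.2 h

/-- Translation by `k`. -/
noncomputable def shiftOp (k : ℤ) : EllTwo G →L[ℂ] EllTwo G :=
  LinearMap.mkContinuous
    { toFun := fun x => ⟨fun n => x (n + k), by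
        exact (memlp_two_iff (fun n => x (n + k))).2
          (shift_hasSum k (fun n => ‖x n‖ ^ 2) _ (ell_norm_sq x)).summable⟩
      map_add' := fun x y => by ext n; rfl
      map_smul' := fun c x => by ext n; rfl } 1 (by
    intro x
    rw [one_mul]
    refine le_of_sq_le_sq (le_of_eq ?_) (by positivity)
    exact (ell_norm_sq _).unique (shift_hasSum k (fun n => ‖x n‖ ^ 2) _ (ell_norm_sq x)))

@[simp] theorem shiftOp_apply (k : ℤ) (x : EllTwo G) (n : ℤ) :
    shiftOp k x n = x (n + k) := rfl

variable [CompleteSpace G]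

theorem star_diagOp (A : G →L[ℂ] G) : star (diagOp A) = diagOp (star A) := by
  symm
  refine (ContinuousLinearMap.eq_adjoint_iff _ _).2 ?_
  intro x y
  rw [lp.inner_eq_tsum, lp.inner_eq_tsum]
  refine tsum_congr fun n => ?_
  simp [ContinuousLinearMap.star_eq_adjoint, ContinuousLinearMap.adjoint_inner_left]

theorem star_shiftOp (k : ℤ) : star (shiftOp (G := G) k) = shiftOp (-k) := by
  symm
  refine (ContinuousLinearMap.eq_adjoint_iff _ _).2 ?_
  intro x y
  rw [lp.inner_eq_tsum, lp.inner_eq_tsum]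
  rw [← (Equiv.addRight k).tsum_eq]
  refine tsum_congr fun n => ?_
  simp

end ell2

/-- The Berger–Coburn–Lebow type pair of commuting unitaries. -/
theorem bcl_algebra {R : Type*} [Ring R] [StarRing R] (B P v : R)
    (hB : star B * B = 1) (hB' : B * star B = 1) (hv : star v * v = 1) (hv' : v * star v = 1)
    (hP : P * P = P) (hPs : star P = P) (hBP : B * P = P * B) (hBv : B * v = v * B) :
    let V₁ := (P * B + (1 - P)) * v
    let V₂ := star v * (P + (1 - P) * B)
    star V₁ * V₁ = 1 ∧ V₁ * star V₁ = 1 ∧ star V₂ * V₂ = 1 ∧ V₂ * star V₂ = 1 ∧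
      V₁ * V₂ = V₂ * V₁ := by
  intro V₁ V₂
  have hBP' : star B * P = P * star B := by
    have := congrArg star hBP
    simpa [hPs] using this.symm
  have hPQ : P * (1 - P) = 0 := by rw [mul_sub, hP]; simp
  have hQP : (1 - P) * P = 0 := by rw [sub_mul, hP]; simp
  have hQQ : (1 - P) * (1 - P) = 1 - P := by rw [mul_sub, hQP]; simp
  have hBQ : B * (1 - P) = (1 - P) * B := by rw [mul_sub, sub_mul, hBP]; simp
  have hBQ' : star B * (1 - P) = (1 - P) * star B := by rw [mul_sub, sub_mul, hBP']; simp
  have hQs : star (1 - P) = 1 - P := by simp [hPs]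
  have hs : P + (1 - P) = 1 := by abel
  generalize hQ : 1 - P = Q at *
  have e1 : star (P * B + Q) = P * star B + Q := by
    rw [star_add, star_mul, hPs, hQs, hBP']
  have e2 : star (P + Q * B) = P + Q * star B := by
    rw [star_add, star_mul, hPs, hQs, hBQ']
  have key : ∀ X Y : R, X * P = P * X → X * Q = Q * X →
      (P * X + Q) * (P * Y + Q) = P * (X * Y) + Q := by
    intro X Y h1 h2
    have a1 : P * X * (P * Y) = P * (X * Y) := by
      rw [mul_assoc, ← mul_assoc X, h1, ← mul_assoc, ← mul_assoc, hP, mul_assoc]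
    have a2 : P * X * Q = 0 := by rw [mul_assoc, h2, ← mul_assoc, hPQ, zero_mul]
    have a3 : Q * (P * Y) = 0 := by rw [← mul_assoc, hQP, zero_mul]
    rw [add_mul, mul_add, mul_add, a1, a2, a3, hQQ]; simp
  have key' : ∀ X Y : R, X * P = P * X → X * Q = Q * X →
      (P + Q * X) * (P + Q * Y) = P + Q * (X * Y) := by
    intro X Y h1 h2
    have a1 : Q * X * (Q * Y) = Q * (X * Y) := by
      rw [mul_assoc, ← mul_assoc X, h2, ← mul_assoc, ← mul_assoc, hQQ, mul_assoc]
    have a2 : Q * X * P = 0 := by rw [mul_assoc, h1, ← mul_assoc, hQP, zero_mul]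
    have a3 : P * (Q * Y) = 0 := by rw [← mul_assoc, hPQ, zero_mul]
    rw [add_mul, mul_add, mul_add, a1, a2, a3, hP]; simp
  have c1 : (P * B + Q) * (P + Q * B) = B := by
    have a1 : P * B * P = P * B := by rw [mul_assoc, hBP, ← mul_assoc, hP]
    have a2 : P * B * (Q * B) = 0 := by
      rw [mul_assoc, ← mul_assoc B, hBQ, ← mul_assoc, ← mul_assoc, hPQ]; simp
    have a3 : Q * (Q * B) = Q * B := by rw [← mul_assoc, hQQ]
    rw [add_mul, mul_add, mul_add, a1, a2, a3, hQP, add_zero, zero_add, ← add_mul, hs, one_mul]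
  have c2 : (P + Q * B) * (P * B + Q) = B := by
    have a1 : P * (P * B) = P * B := by rw [← mul_assoc, hP]
    have a2 : Q * B * (P * B) = 0 := by
      rw [mul_assoc, ← mul_assoc B, hBP, ← mul_assoc, ← mul_assoc, hQP]; simp
    have a3 : Q * B * Q = Q * B := by rw [mul_assoc, hBQ, ← mul_assoc, hQQ]
    rw [add_mul, mul_add, mul_add, a1, a2, a3, hPQ, add_zero, zero_add, ← add_mul, hs, one_mul]
  refine ⟨?_, ?_, ?_, ?_, ?_⟩
  · simp only [V₁, hQ]
    rw [star_mul, e1, mul_assoc, ← mul_assoc _ _ v, key _ _ hBP' hBQ', hB, mul_one, hs, one_mul, hv]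
  · simp only [V₁, hQ]
    rw [star_mul, e1, mul_assoc, ← mul_assoc v, hv', one_mul, key _ _ hBP hBQ, hB', mul_one, hs]
  · simp only [V₂, hQ]
    rw [star_mul, e2, star_star, mul_assoc, ← mul_assoc v, hv', one_mul, key' _ _ hBP' hBQ', hB,
      mul_one, hs]
  · simp only [V₂, hQ]
    rw [star_mul, e2, star_star, mul_assoc, ← mul_assoc _ _ v, key' _ _ hBP hBQ, hB', mul_one, hs,
      one_mul, hv]
  · simp only [V₁, V₂, hQ]
    rw [mul_assoc, ← mul_assoc v, hv', one_mul, c1, mul_assoc, ← mul_assoc _ _ v, c2, hBv,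
      ← mul_assoc, hv, one_mul]

theorem ando_abstract {H G : Type*} [NormedAddCommGroup H] [InnerProductSpace ℂ H]
    [NormedAddCommGroup G] [InnerProductSpace ℂ G] [CompleteSpace G]
    (S₁ S₂ : H →L[ℂ] H) (hcomm : S₁ * S₂ = S₂ * S₁) (a b : H →L[ℂ] G) (P v : G →L[ℂ] G)
    (hv : star v * v = 1) (hv' : v * star v = 1) (hP : P * P = P) (hPs : star P = P)
    (hab : ∀ h, v (a h) = b h)
    (h1 : ∀ h, a (S₁ h) = P (b (S₁ (S₂ h))) + (b h - P (b h)))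
    (h2 : ∀ h, b (S₂ h) = P (a h) + (a (S₁ (S₂ h)) - P (a (S₁ (S₂ h)))))
    (hn : ∀ h, ‖a h‖ ^ 2 = ‖h‖ ^ 2 - ‖S₁ (S₂ h)‖ ^ 2)
    (ht : ∀ h, Filter.Tendsto (fun n : ℕ => ‖((S₁ * S₂) ^ n) h‖) Filter.atTop (nhds 0))
    (c : (ℕ × ℕ × ℕ) →₀ ℂ) (M : ℝ) (hM0 : 0 ≤ M)
    (hM : ∀ z w : ℂ, ‖z‖ ≤ 1 → ‖w‖ ≤ 1 →
      ‖∑ p ∈ c.support, c p * (z ^ p.1 * w ^ p.2.1 * (z * w) ^ p.2.2)‖ ≤ M) :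
    ‖∑ p ∈ c.support, c p • (S₁ ^ p.1 * S₂ ^ p.2.1 * (S₁ * S₂) ^ p.2.2)‖ ≤ M := by
  let B : EllTwo G →L[ℂ] EllTwo G := shiftOp 1
  let P' : EllTwo G →L[ℂ] EllTwo G := diagOp P
  let v' : EllTwo G →L[ℂ] EllTwo G := diagOp v
  have hdm : ∀ A C : G →L[ℂ] G, diagOp A * diagOp C = diagOp (A * C) := fun A C => rfl
  have hd1 : diagOp (1 : G →L[ℂ] G) = 1 := rfl
  obtain ⟨u1, u2, u3, u4, u5⟩ := bcl_algebra B P' v'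
    (by ext x n; simp [B, star_shiftOp])
    (by ext x n; simp [B, star_shiftOp])
    (by simp only [v', star_diagOp, hdm, hv, hd1])
    (by simp only [v', star_diagOp, hdm, hv', hd1])
    (by simp only [P', hdm, hP]) (by simp only [P', star_diagOp, hPs]) rfl rfl
  set V₁ : EllTwo G →L[ℂ] EllTwo G := (P' * B + (1 - P')) * v' with hV₁
  set V₂ : EllTwo G →L[ℂ] EllTwo G := star v' * (P' + (1 - P') * B) with hV₂
  have hbound := vn_unitaries V₁ V₂ u1 u2 u3 u4 u5 c M hM0 hM
  have hV₁a : ∀ (x : EllTwo G) (n : ℤ), (V₁ x) n = P (v (x (n + 1))) + (v (x n) - P (v (x n))) :=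
    fun x n => rfl
  have hV₂a : ∀ (x : EllTwo G) (n : ℤ), (V₂ x) n = star v (P (x n) + (x (n + 1) - P (x (n + 1)))) := by
    intro x n
    rw [hV₂]
    simp only [v', star_diagOp]
    rfl
  have hab' : ∀ h, star v (b h) = a h := by
    intro h
    rw [← hab]
    exact congrArg (fun T : G →L[ℂ] G => T (a h)) hv
  let S := S₁ * S₂
  let R : H → EllTwo G → Prop := fun h x => ∀ n : ℕ, x (n : ℤ) = a ((S ^ n) h)
  have hSS : ∀ (n : ℕ) h, (S ^ (n + 1)) h = S₁ (S₂ ((S ^ n) h)) := by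
    intro n h; rw [pow_succ']; rfl
  have hc1 : Commute S₁ S₂ := hcomm
  have hSc1 : ∀ n : ℕ, ∀ h, (S ^ n) (S₁ h) = S₁ ((S ^ n) h) := by
    intro n h
    have : Commute S₁ (S ^ n) := ((Commute.refl S₁).mul_right hc1).pow_right n
    exact congrArg (fun T : H →L[ℂ] H => T h) this.eq.symm
  have hSc2 : ∀ n : ℕ, ∀ h, (S ^ n) (S₂ h) = S₂ ((S ^ n) h) := by
    intro n h
    have : Commute S₂ (S ^ n) := (hc1.symm.mul_right (Commute.refl S₂)).pow_right n
    exact congrArg (fun T : H →L[ℂ] H => T h) this.eq.symm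
  have R1 : ∀ h x, R h x → R (S₁ h) (V₁ x) := by
    intro h x hx n
    have e : x ((n : ℤ) + 1) = a ((S ^ (n + 1)) h) := by exact_mod_cast hx (n + 1)
    rw [hV₁a, e, hx n, hab, hab, hSS, hSc1, h1]
  have R2 : ∀ h x, R h x → R (S₂ h) (V₂ x) := by
    intro h x hx n
    have e : x ((n : ℤ) + 1) = a ((S ^ (n + 1)) h) := by exact_mod_cast hx (n + 1)
    rw [hV₂a, e, hx n, hSS, hSc2, ← h2, hab']
  let RR : (H →L[ℂ] H) → (EllTwo G →L[ℂ] EllTwo G) → Prop := fun A C => ∀ h x, R h x → R (A h) (C x)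
  have RRmul : ∀ A A' C C', RR A C → RR A' C' → RR (A * A') (C * C') :=
    fun A A' C C' hh hh' h x hx => hh _ _ (hh' _ _ hx)
  have RRone : RR 1 1 := fun h x hx => hx
  have RRpow : ∀ A C, RR A C → ∀ n : ℕ, RR (A ^ n) (C ^ n) := by
    intro A C hAC n
    induction n with
    | zero => simpa using RRone
    | succ n ih => rw [pow_succ, pow_succ]; exact RRmul _ _ _ _ ih hAC
  have RRsmul : ∀ (r : ℂ) A C, RR A C → RR (r • A) (r • C) := by
    intro r A C hAC h x hx n
    have := hAC h x hx n
    change r • ((C x) n) = _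
    rw [this]
    simp
  have RRadd : ∀ A C A' C', RR A C → RR A' C' → RR (A + A') (C + C') := by
    intro A C A' C' hh hh' h x hx n
    change (C x) n + (C' x) n = _
    rw [hh h x hx n, hh' h x hx n]
    simp
  have RRzero : RR 0 0 := by
    intro h x hx n
    change (0 : G) = _
    simp
  have RRsum : ∀ s : Finset (ℕ × ℕ × ℕ),
      RR (∑ p ∈ s, c p • (S₁ ^ p.1 * S₂ ^ p.2.1 * (S₁ * S₂) ^ p.2.2))
        (∑ p ∈ s, c p • (V₁ ^ p.1 * V₂ ^ p.2.1 * (V₁ * V₂) ^ p.2.2)) := by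
    classical
    intro s
    induction s using Finset.induction_on with
    | empty => simpa using RRzero
    | insert p s hp ih =>
      rw [Finset.sum_insert hp, Finset.sum_insert hp]
      exact RRadd _ _ _ _ (RRsmul _ _ _ (RRmul _ _ _ _ (RRmul _ _ _ _ (RRpow _ _ R1 _)
        (RRpow _ _ R2 _)) (RRpow _ _ (RRmul _ _ _ _ R1 R2) _))) ih
  have hsum : ∀ h, HasSum (fun n : ℕ => ‖a ((S ^ n) h)‖ ^ 2) (‖h‖ ^ 2) := by
    intro h
    rw [hasSum_iff_tendsto_nat_of_nonneg (fun n => by positivity)]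
    have e : ∀ N : ℕ, ∑ n ∈ Finset.range N, ‖a ((S ^ n) h)‖ ^ 2 =
        ‖h‖ ^ 2 - ‖(S ^ N) h‖ ^ 2 := by
      intro N
      induction N with
      | zero => simp
      | succ N ih => rw [Finset.sum_range_succ, ih, hn, hSS]; ring
    simp only [e]
    have h3 := ((ht h).pow 2).const_sub (‖h‖ ^ 2)
    rw [zero_pow two_ne_zero, sub_zero] at h3
    exact h3
  refine ContinuousLinearMap.opNorm_le_bound _ hM0 fun h => ?_
  let f : ℤ → G := fun n => if 0 ≤ n then a ((S ^ n.toNat) h) else 0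
  have hf : HasSum (fun n : ℤ => ‖f n‖ ^ 2) (‖h‖ ^ 2) := by
    rw [← Function.Injective.hasSum_iff (g := fun n : ℕ => (n : ℤ)) Nat.cast_injective]
    · simpa [f, Function.comp_def] using hsum h
    · intro n hn
      have : ¬ 0 ≤ n := fun h0 => hn ⟨n.toNat, by simp [h0]⟩
      simp [f, this]
  let x : EllTwo G := ⟨f, (memlp_two_iff f).2 hf.summable⟩
  have hx : ‖x‖ = ‖h‖ := by
    have := (ell_norm_sq x).unique hf
    exact (sq_eq_sq₀ (norm_nonneg _) (norm_nonneg _)).1 this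
  have hRx : R h x := by
    intro n
    change f n = _
    simp [f]
  have hR := RRsum c.support h x hRx
  set A := ∑ p ∈ c.support, c p • (S₁ ^ p.1 * S₂ ^ p.2.1 * (S₁ * S₂) ^ p.2.2)
  set C := ∑ p ∈ c.support, c p • (V₁ ^ p.1 * V₂ ^ p.2.1 * (V₁ * V₂) ^ p.2.2)
  have hle : ‖A h‖ ≤ ‖C x‖ := by
    refine le_of_sq_le_sq ?_ (norm_nonneg _)
    refine hasSum_le_inj (fun n : ℕ => (n : ℤ)) Nat.cast_injective (fun n _ => by positivity)
      (fun n => ?_) (hsum (A h)) (ell_norm_sq (C x))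
    rw [hR n]
  calc ‖A h‖ ≤ ‖C x‖ := hle
    _ ≤ ‖C‖ * ‖x‖ := C.le_opNorm x
    _ ≤ M * ‖h‖ := by rw [hx]; gcongr

theorem exists_defect {H : Type*} [NormedAddCommGroup H] [InnerProductSpace ℂ H]
    [CompleteSpace H] (S : H →L[ℂ] H) (hS : ‖S‖ ≤ 1) :
    ∃ D : H →L[ℂ] H, ∀ h, ‖D h‖ ^ 2 = ‖h‖ ^ 2 - ‖S h‖ ^ 2 := by
  have hpos : 0 ≤ 1 - star S * S := by
    rw [ContinuousLinearMap.nonneg_iff_isPositive, ContinuousLinearMap.isPositive_iff_complex]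
    intro x
    have e : inner ℂ ((1 - star S * S) x) x = ((‖x‖ ^ 2 - ‖S x‖ ^ 2 : ℝ) : ℂ) := by
      simp [ContinuousLinearMap.star_eq_adjoint,
        ContinuousLinearMap.adjoint_inner_left, inner_self_eq_norm_sq_to_K]
    rw [e]
    refine ⟨by rw [RCLike.re_to_complex, Complex.ofReal_re], ?_⟩
    have h1 : ‖S x‖ ≤ ‖x‖ := by
      simpa using S.le_of_opNorm_le hS x
    have := pow_le_pow_left₀ (norm_nonneg _) h1 2
    rw [RCLike.re_to_complex, Complex.ofReal_re]
    linarith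
  obtain ⟨D, hD⟩ := CStarAlgebra.nonneg_iff_eq_star_mul_self.1 hpos
  refine ⟨D, fun h => ?_⟩
  have e := congrArg (fun T : H →L[ℂ] H => inner ℂ (T h) h) hD
  have e1 : ∀ T : H →L[ℂ] H, inner ℂ ((star T * T) h) h = ((‖T h‖ ^ 2 : ℝ) : ℂ) := by
    intro T
    change inner ℂ (adjoint T (T h)) h = _
    rw [ContinuousLinearMap.adjoint_inner_left, inner_self_eq_norm_sq_to_K]
    simp
  have e2 : inner ℂ ((1 - star S * S) h) h = inner ℂ h h - inner ℂ ((star S * S) h) h := by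
    rw [← inner_sub_left]
    rfl
  simp only [e2, e1, inner_self_eq_norm_sq_to_K] at e
  have e' : ((‖h‖ ^ 2 - ‖S h‖ ^ 2 : ℝ) : ℂ) = ((‖D h‖ ^ 2 : ℝ) : ℂ) := by
    rw [← e]
    simp
  exact (Complex.ofReal_injective e').symm

theorem exists_reflection {H G : Type*} [NormedAddCommGroup H] [InnerProductSpace ℂ H]
    [NormedAddCommGroup G] [InnerProductSpace ℂ G] [CompleteSpace G]
    (a b : H →ₗ[ℂ] G) (hn : ∀ h, ‖a h‖ = ‖b h‖) (ho : ∀ h k, inner ℂ (a h) (b k) = 0) :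
    ∃ e : G ≃ₗᵢ[ℂ] G, ∀ h, e (a h) = b h := by
  have hi : ∀ h k, inner ℂ (a h) (a k) = inner ℂ (b h) (b k) := by
    intro h k
    rw [inner_eq_sum_norm_sq_div_four, inner_eq_sum_norm_sq_div_four]
    simp only [← map_add, ← map_sub, ← map_smul, hn]
  have ho' : ∀ h k, inner ℂ (b h) (a k) = 0 := fun h k => inner_eq_zero_symm.1 (ho k h)
  let K := LinearMap.range (a - b)
  refine ⟨Kᗮ.reflection, fun h => ?_⟩
  have h1 : Kᗮ.reflection (a h + b h) = a h + b h := by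
    apply Submodule.reflection_mem_subspace_eq_self
    rw [Submodule.mem_orthogonal]
    rintro _ ⟨k, rfl⟩
    simp [inner_sub_left, inner_add_right, hi, ho, ho']
  have h2 : Kᗮ.reflection (a h - b h) = -(a h - b h) :=
    Submodule.reflection_mem_subspace_orthogonalComplement_eq_neg
      (K.le_orthogonal_orthogonal ⟨h, rfl⟩)
  have e : a h = (2⁻¹ : ℂ) • ((a h + b h) + (a h - b h)) := by
    module
  rw [e, map_smul, map_add, h1, h2]
  module

/-- Fourfold Hilbert sum. -/
abbrev Four (H : Type*) [NormedAddCommGroup H] : Type _ := PiLp 2 (fun _ : Fin 4 => H)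

/-- An operator into the fourfold sum given by its components. -/
noncomputable def toFour {H E : Type*} [NormedAddCommGroup H] [InnerProductSpace ℂ H]
    [NormedAddCommGroup E] [InnerProductSpace ℂ E]
    (A : Fin 4 → (E →L[ℂ] H)) : E →L[ℂ] Four H :=
  ((PiLp.continuousLinearEquiv 2 ℂ (fun _ : Fin 4 => H)).symm : (Fin 4 → H) →L[ℂ] Four H) ∘L
    ContinuousLinearMap.pi A

@[simp] theorem toFour_apply {H E : Type*} [NormedAddCommGroup H] [InnerProductSpace ℂ H]
    [NormedAddCommGroup E] [InnerProductSpace ℂ E]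
    (A : Fin 4 → (E →L[ℂ] H)) (x : E) (i : Fin 4) : toFour A x i = A i x := rfl

theorem four_norm_sq {H : Type*} [NormedAddCommGroup H] [InnerProductSpace ℂ H] (x : Four H) :
    ‖x‖ ^ 2 = ‖x 0‖ ^ 2 + ‖x 1‖ ^ 2 + ‖x 2‖ ^ 2 + ‖x 3‖ ^ 2 := by
  rw [PiLp.norm_sq_eq_of_L2, Fin.sum_univ_four]

theorem four_inner {H : Type*} [NormedAddCommGroup H] [InnerProductSpace ℂ H] (x y : Four H) :
    inner ℂ x y = inner ℂ (x 0) (y 0) + inner ℂ (x 1) (y 1) + inner ℂ (x 2) (y 2)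
      + inner ℂ (x 3) (y 3) := by
  rw [PiLp.inner_apply, Fin.sum_univ_four]

theorem four_ext {H : Type*} [NormedAddCommGroup H] {x y : Four H} (h0 : x 0 = y 0)
    (h1 : x 1 = y 1) (h2 : x 2 = y 2) (h3 : x 3 = y 3) : x = y := by
  ext i
  fin_cases i <;> assumption

theorem ando_pure {H : Type*} [NormedAddCommGroup H] [InnerProductSpace ℂ H] [CompleteSpace H]
    (S₁ S₂ : H →L[ℂ] H) (hS₁ : ‖S₁‖ ≤ 1) (hS₂ : ‖S₂‖ ≤ 1) (hcomm : S₁ * S₂ = S₂ * S₁)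
    (ht : ∀ h, Filter.Tendsto (fun n : ℕ => ‖((S₁ * S₂) ^ n) h‖) Filter.atTop (nhds 0))
    (c : (ℕ × ℕ × ℕ) →₀ ℂ) (M : ℝ) (hM0 : 0 ≤ M)
    (hM : ∀ z w : ℂ, ‖z‖ ≤ 1 → ‖w‖ ≤ 1 →
      ‖∑ p ∈ c.support, c p * (z ^ p.1 * w ^ p.2.1 * (z * w) ^ p.2.2)‖ ≤ M) :
    ‖∑ p ∈ c.support, c p • (S₁ ^ p.1 * S₂ ^ p.2.1 * (S₁ * S₂) ^ p.2.2)‖ ≤ M := by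
  obtain ⟨D₁, hD₁⟩ := exists_defect S₁ hS₁
  obtain ⟨D₂, hD₂⟩ := exists_defect S₂ hS₂
  have hc : ∀ h, S₂ (S₁ h) = S₁ (S₂ h) := fun h =>
    congrArg (fun T : H →L[ℂ] H => T h) hcomm.symm
  let a : H →L[ℂ] Four H := toFour ![D₁ ∘L S₂, D₂, 0, 0]
  let b' : H →L[ℂ] Four H := toFour ![0, 0, D₁, D₂ ∘L S₁]
  let b : H →L[ℂ] Four H := toFour ![D₁, D₂ ∘L S₁, 0, 0]
  have hna : ∀ h, ‖a h‖ ^ 2 = ‖h‖ ^ 2 - ‖S₁ (S₂ h)‖ ^ 2 := by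
    intro h
    rw [four_norm_sq]
    simp [a, hD₁, hD₂]
  have hnb : ∀ h, ‖b' h‖ ^ 2 = ‖h‖ ^ 2 - ‖S₁ (S₂ h)‖ ^ 2 := by
    intro h
    rw [four_norm_sq]
    simp [b', hD₁, hD₂, hc]
  obtain ⟨e, he⟩ := exists_reflection (a : H →ₗ[ℂ] Four H) (b' : H →ₗ[ℂ] Four H)
    (fun h => (sq_eq_sq₀ (norm_nonneg _) (norm_nonneg _)).1 ((hna h).trans (hnb h).symm))
    (fun h k => by
      rw [four_inner]
      simp [a, b'])
  let σ : Equiv.Perm (Fin 4) := Equiv.addRight 2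
  let w : Four H ≃ₗᵢ[ℂ] Four H := e.trans (LinearIsometryEquiv.piLpCongrLeft 2 ℂ H σ)
  let v : unitary (Four H →L[ℂ] Four H) := Unitary.linearIsometryEquiv.symm w
  let pr : Fin 4 → (Four H →L[ℂ] H) := fun i => PiLp.proj 2 (fun _ : Fin 4 => H) i
  let P : Four H →L[ℂ] Four H := toFour ![pr 0, 0, pr 2, 0]
  refine ando_abstract S₁ S₂ hcomm a b P (v : Four H →L[ℂ] Four H)
    (Unitary.star_mul_self_of_mem v.2) (Unitary.mul_star_self_of_mem v.2) ?_ ?_ ?_ ?_ ?_ hna ht c M hM0 hM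
  · ext x i
    fin_cases i <;> simp [P, pr]
  · symm
    refine (ContinuousLinearMap.eq_adjoint_iff _ _).2 fun x y => ?_
    rw [four_inner, four_inner]
    simp [P, pr]
  · intro h
    have e1 : (v : Four H →L[ℂ] Four H) (a h) =
      LinearIsometryEquiv.piLpCongrLeft 2 ℂ H σ (e (a h)) := rfl
    have e2 : e (a h) = b' h := he h
    rw [e1, e2]
    apply four_ext <;> simp [b, b', σ, LinearIsometryEquiv.piLpCongrLeft_apply] <;> rfl
  · intro h
    apply four_ext <;> simp [a, b, P, pr, hc]
  · intro h
    apply four_ext <;> simp [a, b, P, pr, hc]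

theorem ando_ineq {H : Type*} [NormedAddCommGroup H] [InnerProductSpace ℂ H] [CompleteSpace H]
    (T₁ T₂ : H →L[ℂ] H) (hT₁ : ‖T₁‖ ≤ 1) (hT₂ : ‖T₂‖ ≤ 1) (hcomm : T₁ * T₂ = T₂ * T₁)
    (c : (ℕ × ℕ × ℕ) →₀ ℂ) (M : ℝ) (hM0 : 0 ≤ M)
    (hM : ∀ z w : ℂ, ‖z‖ ≤ 1 → ‖w‖ ≤ 1 →
      ‖∑ p ∈ c.support, c p * (z ^ p.1 * w ^ p.2.1 * (z * w) ^ p.2.2)‖ ≤ M) :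
    ‖∑ p ∈ c.support, c p • (T₁ ^ p.1 * T₂ ^ p.2.1 * (T₁ * T₂) ^ p.2.2)‖ ≤ M := by
  let F : ℝ → (H →L[ℂ] H) := fun r => ∑ p ∈ c.support,
    c p • ((((r : ℂ) • T₁)) ^ p.1 * ((r : ℂ) • T₂) ^ p.2.1 * (((r : ℂ) • T₁) * ((r : ℂ) • T₂)) ^ p.2.2)
  have hF : Continuous F := by fun_prop
  have hF1 : F 1 = ∑ p ∈ c.support, c p • (T₁ ^ p.1 * T₂ ^ p.2.1 * (T₁ * T₂) ^ p.2.2) := by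
    simp [F]
  rw [← hF1]
  have hlim : Filter.Tendsto (fun r => ‖F r‖) (nhdsWithin 1 (Set.Iio 1)) (nhds ‖F 1‖) :=
    (hF.norm.tendsto 1).mono_left nhdsWithin_le_nhds
  refine le_of_tendsto hlim ?_
  have hmem : Set.Ioo (0 : ℝ) 1 ∈ nhdsWithin (1 : ℝ) (Set.Iio 1) :=
    Ioo_mem_nhdsLT (by norm_num)
  filter_upwards [hmem] with r hr
  have hnr : ∀ T : H →L[ℂ] H, ‖T‖ ≤ 1 → ‖(r : ℂ) • T‖ ≤ r := by
    intro T hT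
    rw [norm_smul, Complex.norm_real, Real.norm_of_nonneg hr.1.le]
    nlinarith [hr.1]
  refine ando_pure ((r : ℂ) • T₁) ((r : ℂ) • T₂) ((hnr _ hT₁).trans hr.2.le)
    ((hnr _ hT₂).trans hr.2.le) (by simp [hcomm]) (fun h => ?_) c M hM0 hM
  set S := ((r : ℂ) • T₁) * ((r : ℂ) • T₂)
  have hS : ‖S‖ ≤ r := by
    refine (norm_mul_le _ _).trans ?_
    nlinarith [hnr _ hT₁, hnr _ hT₂, norm_nonneg ((r : ℂ) • T₁), norm_nonneg ((r : ℂ) • T₂),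
      hr.1, hr.2]
  have hz : Filter.Tendsto (fun n : ℕ => r ^ n * ‖h‖) Filter.atTop (nhds 0) := by
    simpa using (tendsto_pow_atTop_nhds_zero_of_lt_one hr.1.le hr.2).mul_const ‖h‖
  refine squeeze_zero (fun n => norm_nonneg _) (fun n => ?_) hz
  induction n with
  | zero => simp
  | succ n ih =>
    rw [pow_succ', pow_succ']
    calc ‖(S * S ^ n) h‖ = ‖S ((S ^ n) h)‖ := rfl
      _ ≤ r * ‖(S ^ n) h‖ := S.le_of_opNorm_le hS _
      _ ≤ r * (r ^ n * ‖h‖) := by gcongr; exact hr.1.le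
      _ = r * r ^ n * ‖h‖ := by ring

theorem entry_le (X : Matrix (Fin 2) (Fin 2) ℂ) (i j : Fin 2) :
    ‖X i j‖ ≤ ‖Matrix.toEuclideanCLM (𝕜 := ℂ) X‖ := by
  have h1 := (Matrix.toEuclideanCLM (𝕜 := ℂ) X).le_opNorm (EuclideanSpace.single j 1)
  have h2 := PiLp.norm_apply_le ((Matrix.toEuclideanCLM (𝕜 := ℂ) X) (EuclideanSpace.single j 1)) i
  have h3 : (Matrix.toEuclideanCLM (𝕜 := ℂ) X) (EuclideanSpace.single j 1) i = X i j := by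
    simp [Matrix.ofLp_toEuclideanCLM]
  rw [h3] at h2
  simpa using h2.trans h1

theorem diag_norm_le (z w : ℂ) (t : ℝ) (hz : ‖z‖ ≤ t) (hw : ‖w‖ ≤ t) :
    ‖Matrix.toEuclideanCLM (𝕜 := ℂ) (Matrix.diagonal ![z, w])‖ ≤ t := by
  have ht : 0 ≤ t := (norm_nonneg z).trans hz
  refine ContinuousLinearMap.opNorm_le_bound _ ht fun x => ?_
  refine le_of_sq_le_sq ?_ (by positivity)
  rw [mul_pow, EuclideanSpace.norm_sq_eq, EuclideanSpace.norm_sq_eq, Fin.sum_univ_two,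
    Fin.sum_univ_two]
  simp only [Matrix.ofLp_toEuclideanCLM, Matrix.mulVec_diagonal, norm_mul, mul_pow]
  have h1 := pow_le_pow_left₀ (norm_nonneg _) hz 2
  have h2 := pow_le_pow_left₀ (norm_nonneg _) hw 2
  simp only [Matrix.cons_val_zero, Matrix.cons_val_one]
  nlinarith [sq_nonneg ‖x 0‖, sq_nonneg ‖x 1‖]

/-- **Tetrablock von Neumann inequality.** Let `T₁, T₂` be commuting contractions,
`T = T₁T₂`, and let `𝔼 = {(X₀₀, X₁₁, det X) : X a 2×2 complex matrix, ‖X‖ < 1}` be the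
tetrablock.  For any polynomial `f(x₁,x₂,x₃) = Σ c(i,j,k) x₁ⁱ x₂ʲ x₃ᵏ` with finitely
supported coefficients, `‖f(T₁,T₂,T)‖ ≤ sup { |f(x)| : x ∈ closure 𝔼 }`. -/
theorem tetrablock_von_neumann {H : Type*} [NormedAddCommGroup H] [InnerProductSpace ℂ H]
    [CompleteSpace H] (T₁ T₂ : H →L[ℂ] H)
    (hT₁ : ‖T₁‖ ≤ 1) (hT₂ : ‖T₂‖ ≤ 1) (hcomm : T₁ * T₂ = T₂ * T₁)
    (c : (ℕ × ℕ × ℕ) →₀ ℂ) :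
    ‖∑ p ∈ c.support, c p • (T₁ ^ p.1 * T₂ ^ p.2.1 * (T₁ * T₂) ^ p.2.2)‖ ≤
      sSup ((fun x : ℂ × ℂ × ℂ =>
          ‖∑ p ∈ c.support, c p * (x.1 ^ p.1 * x.2.1 ^ p.2.1 * x.2.2 ^ p.2.2)‖) ''
        closure {x : ℂ × ℂ × ℂ | ∃ X : Matrix (Fin 2) (Fin 2) ℂ,
          ‖Matrix.toEuclideanCLM (𝕜 := ℂ) X‖ < 1 ∧ x = (X 0 0, X 1 1, X.det)}) := by

  set E : Set (ℂ × ℂ × ℂ) := {x : ℂ × ℂ × ℂ | ∃ X : Matrix (Fin 2) (Fin 2) ℂ,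
          ‖Matrix.toEuclideanCLM (𝕜 := ℂ) X‖ < 1 ∧ x = (X 0 0, X 1 1, X.det)} with hE
  set f : ℂ × ℂ × ℂ → ℝ := fun x =>
    ‖∑ p ∈ c.support, c p * (x.1 ^ p.1 * x.2.1 ^ p.2.1 * x.2.2 ^ p.2.2)‖ with hf
  have hfc : Continuous f := by fun_prop
  have hEb : Bornology.IsBounded E := by
    refine (Metric.isBounded_closedBall (x := (0 : ℂ × ℂ × ℂ)) (r := 2)).subset ?_
    rintro _ ⟨X, hX, rfl⟩
    have he : ∀ i j, ‖X i j‖ ≤ 1 := fun i j => (entry_le X i j).trans hX.le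
    rw [mem_closedBall_zero_iff, Prod.norm_def, Prod.norm_def]
    refine max_le ((he 0 0).trans (by norm_num)) (max_le ((he 1 1).trans (by norm_num)) ?_)
    change ‖X.det‖ ≤ 2
    rw [Matrix.det_fin_two]
    refine (norm_sub_le _ _).trans ?_
    rw [norm_mul, norm_mul]
    nlinarith [mul_le_one₀ (he 0 0) (norm_nonneg _) (he 1 1),
      mul_le_one₀ (he 0 1) (norm_nonneg _) (he 1 0)]
  have hbdd : BddAbove (f '' closure E) :=
    (hEb.isCompact_closure.image hfc).bddAbove
  have hmem : ∀ z w : ℂ, ‖z‖ ≤ 1 → ‖w‖ ≤ 1 → (z, w, z * w) ∈ closure E := by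
    intro z w hz hw
    let g : ℝ → ℂ × ℂ × ℂ := fun t => ((t : ℂ) * z, (t : ℂ) * w, ((t : ℂ) * z) * ((t : ℂ) * w))
    have hg : Continuous g := by fun_prop
    have hg1 : g 1 = (z, w, z * w) := by simp [g]
    rw [← hg1]
    have hlim : Filter.Tendsto g (nhdsWithin 1 (Set.Iio 1)) (nhds (g 1)) :=
      (hg.tendsto 1).mono_left nhdsWithin_le_nhds
    refine mem_closure_of_tendsto hlim ?_
    have hIoo : Set.Ioo (0 : ℝ) 1 ∈ nhdsWithin (1 : ℝ) (Set.Iio 1) :=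
      Ioo_mem_nhdsLT (by norm_num)
    filter_upwards [hIoo] with t ht
    have hn : ∀ y : ℂ, ‖y‖ ≤ 1 → ‖(t : ℂ) * y‖ ≤ t := by
      intro y hy
      rw [norm_mul, Complex.norm_real, Real.norm_of_nonneg ht.1.le]
      nlinarith [ht.1]
    refine ⟨Matrix.diagonal ![(t : ℂ) * z, (t : ℂ) * w],
      (diag_norm_le _ _ t (hn z hz) (hn w hw)).trans_lt ht.2, ?_⟩
    simp [g, Matrix.det_diagonal, Fin.prod_univ_two]
  have hle : ∀ z w : ℂ, ‖z‖ ≤ 1 → ‖w‖ ≤ 1 →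
      ‖∑ p ∈ c.support, c p * (z ^ p.1 * w ^ p.2.1 * (z * w) ^ p.2.2)‖ ≤ sSup (f '' closure E) :=
    fun z w hz hw => le_csSup hbdd ⟨_, hmem z w hz hw, rfl⟩
  have h0 : 0 ≤ sSup (f '' closure E) :=
    (norm_nonneg _).trans (hle 0 0 (by simp) (by simp))
  exact ando_ineq T₁ T₂ hT₁ hT₂ hcomm c _ h0 hle
end

section
/- Two-variable von Neumann inequality: Let T₁ and T₂ be commuting contractions on a complex Hilbert space H. Then for every finitely supported family of coefficients c : ℕ×ℕ → ℂ, ‖ Σ_{(i,j)} c(i,j) · T₁^i T₂^j ‖ ≤ sup { | Σ_{(i,j)} c(i,j) · z^i w^j | : z, w ∈ ℂ, |z| ≤ 1, |w| ≤ 1 }. -/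
open ContinuousLinearMap

/-- Vector-valued Parseval identity on a finite abelian group. -/
theorem vn_parseval {G F : Type*} [AddCommGroup G] [Fintype G] [NormedAddCommGroup F]
    [InnerProductSpace ℂ F] (f : G → F) :
    ∑ ψ : AddChar G ℂ, ‖∑ k, ψ k • f k‖ ^ 2 = Fintype.card G * ∑ k, ‖f k‖ ^ 2 := by
  classical
  have key : ∀ ψ : AddChar G ℂ, ((‖∑ k, ψ k • f k‖ ^ 2 : ℝ) : ℂ)
      = ∑ k, ∑ l, ψ (l - k) * inner ℂ (f k) (f l) := by
    intro ψ
    have := inner_self_eq_norm_sq_to_K (𝕜 := ℂ) (∑ k, ψ k • f k)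
    push_cast
    erw [← this]
    rw [sum_inner]
    refine Finset.sum_congr rfl fun k _ => ?_
    rw [inner_sum]
    refine Finset.sum_congr rfl fun l _ => ?_
    rw [inner_smul_left, inner_smul_right, sub_eq_add_neg, AddChar.map_add_eq_mul,
      AddChar.map_neg_eq_conj]
    ring
  have : ((∑ ψ : AddChar G ℂ, ‖∑ k, ψ k • f k‖ ^ 2 : ℝ) : ℂ)
      = ((Fintype.card G * ∑ k, ‖f k‖ ^ 2 : ℝ) : ℂ) := by
    rw [Complex.ofReal_sum, Finset.sum_congr rfl fun ψ _ => key ψ, Finset.sum_comm]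
    push_cast
    rw [Finset.mul_sum]
    refine Finset.sum_congr rfl fun k _ => ?_
    rw [Finset.sum_comm]
    simp_rw [← Finset.sum_mul, AddChar.sum_apply_eq_ite, sub_eq_zero]
    simp [inner_self_eq_norm_sq_to_K]
  exact_mod_cast this

theorem vn_conv {G F ι : Type*} [AddCommGroup G] [Fintype G] [NormedAddCommGroup F]
    [InnerProductSpace ℂ F] (f : G → F) (S : Finset ι) (c : ι → ℂ) (s : ι → G) (M : ℝ)
    (hM : ∀ ψ : AddChar G ℂ, ‖∑ n ∈ S, c n * ψ (s n)‖ ≤ M) :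
    ∑ k, ‖∑ n ∈ S, c n • f (k - s n)‖ ^ 2 ≤ M ^ 2 * ∑ k, ‖f k‖ ^ 2 := by
  have h1 := vn_parseval f
  have h2 := vn_parseval fun k => ∑ n ∈ S, c n • f (k - s n)
  have h3 : ∀ ψ : AddChar G ℂ, ∑ k, ψ k • ∑ n ∈ S, c n • f (k - s n)
      = (∑ n ∈ S, c n * ψ (s n)) • ∑ k, ψ k • f k := by
    intro ψ
    simp_rw [Finset.smul_sum]
    rw [Finset.sum_comm]
    simp_rw [Finset.sum_smul]
    rw [Finset.sum_comm (s := Finset.univ) (t := S)]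
    refine Finset.sum_congr rfl fun n _ => ?_
    rw [← Equiv.sum_comp (Equiv.addRight (s n))]
    refine Finset.sum_congr rfl fun k _ => ?_
    simp only [Equiv.coe_addRight, add_sub_cancel_right, smul_smul, AddChar.map_add_eq_mul]
    congr 1; ring
  simp_rw [h3] at h2
  have hpos : (0 : ℝ) < Fintype.card G := by exact_mod_cast Fintype.card_pos
  refine le_of_mul_le_mul_left ?_ hpos
  rw [← h2, mul_left_comm, ← h1, Finset.mul_sum]
  refine Finset.sum_le_sum fun ψ _ => ?_
  rw [norm_smul, mul_pow]
  gcongr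
  exact hM ψ

theorem vn_defect {H : Type*} [NormedAddCommGroup H] [InnerProductSpace ℂ H]
    [CompleteSpace H] (T : H →L[ℂ] H) (hT : ‖T‖ ≤ 1) :
    ∃ D : H →L[ℂ] H, ∀ h, ‖T h‖ ^ 2 + ‖D h‖ ^ 2 = ‖h‖ ^ 2 := by
  have hpos : 0 ≤ 1 - star T * T := by
    rw [sub_nonneg]
    refine (CStarAlgebra.star_mul_le_algebraMap_norm_sq (a := T)).trans ?_
    rw [← map_one (algebraMap ℝ (H →L[ℂ] H))]
    exact algebraMap_mono _ (by nlinarith [norm_nonneg T])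
  refine ⟨CFC.sqrt (1 - star T * T), fun h => ?_⟩
  set D := CFC.sqrt (1 - star T * T) with hD
  have hsa : star D = D := (CFC.sqrt_nonneg _ : 0 ≤ D).isSelfAdjoint
  have hDD : star D * D = 1 - star T * T := by
    rw [hsa, hD, CFC.sqrt_mul_sqrt_self _ hpos]
  rw [apply_norm_sq_eq_inner_adjoint_left T, apply_norm_sq_eq_inner_adjoint_left D]
  have e1 : adjoint D ∘L D = 1 - adjoint T ∘L T := hDD
  rw [e1]
  simp [inner_sub_left]
  norm_cast

theorem vn_partial {H E : Type*} [NormedAddCommGroup H] [InnerProductSpace ℂ H]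
    [NormedAddCommGroup E] [InnerProductSpace ℂ E] [CompleteSpace E]
    (A B : H →ₗ[ℂ] E) (hAB : ∀ h, ‖A h‖ = ‖B h‖) :
    ∃ w : E →L[ℂ] E, w ∘L (adjoint w ∘L w) = w ∧ (∀ h, w (A h) = B h) ∧
      ∀ h, adjoint w (B h) = A h := by
  let L : Submodule ℂ E := (LinearMap.range A).topologicalClosure
  have : CompleteSpace L := (Submodule.isClosed_topologicalClosure _).completeSpace_coe
  let e : H →ₗ[ℂ] L := A.codRestrict L fun h =>
    Submodule.le_topologicalClosure _ (LinearMap.mem_range_self A h)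
  have hd : DenseRange e := by
    intro x
    have hx : (x : E) ∈ closure (LinearMap.range A : Set E) := x.2
    rw [closure_subtype]
    refine closure_mono ?_ hx
    rintro _ ⟨h, rfl⟩
    exact ⟨e h, ⟨h, rfl⟩, rfl⟩
  have hn : ∃ C : ℝ, ∀ x, ‖B x‖ ≤ C * ‖e x‖ := ⟨1, fun x => by
    rw [one_mul, ← hAB]; rfl⟩
  let u : L →L[ℂ] E := B.extendOfNorm e
  have hu : ∀ h, u (e h) = B h := LinearMap.extendOfNorm_eq hd hn
  have hun : ∀ x, ‖u x‖ = ‖x‖ := by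
    intro x
    refine isClosed_property hd (p := fun x => ‖u x‖ = ‖x‖)
      (isClosed_eq (by fun_prop) (by fun_prop)) (fun h => ?_) x
    rw [hu, ← hAB]; rfl
  have huu : adjoint u ∘L u = 1 := by
    exact (ContinuousLinearMap.norm_map_iff_adjoint_comp_self u).1 hun
  let P : E →L[ℂ] L := L.orthogonalProjectionOnto
  have hP : adjoint P = L.subtypeL := Submodule.adjoint_orthogonalProjectionOnto L
  have hww : adjoint (u ∘L P) ∘L (u ∘L P) = L.subtypeL ∘L P := by
    rw [adjoint_comp, hP, ContinuousLinearMap.comp_assoc, ← ContinuousLinearMap.comp_assoc (adjoint u) u P, huu]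
    rfl
  have hPe : ∀ h, P (A h) = e h := fun h => Submodule.orthogonalProjectionOnto_mem_subspace_eq_self (e h)
  have hw : ∀ h, (u ∘L P) (A h) = B h := fun h => by
    simp [hPe, hu]
  refine ⟨u ∘L P, ?_, hw, fun h => ?_⟩
  · rw [hww]
    ext x
    simp only [ContinuousLinearMap.comp_apply]
    congr 1
    exact Submodule.orthogonalProjectionOnto_mem_subspace_eq_self (P x)
  · rw [← hw, ← ContinuousLinearMap.comp_apply, hww]
    simp [hPe]; rfl

theorem vn_ext {E F : Type*} {x y : WithLp 2 (E × F)} (h1 : x.fst = y.fst)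
    (h2 : x.snd = y.snd) : x = y :=
  (WithLp.ofLp_injective 2) (Prod.ext h1 h2)

theorem vn_halmos {H E : Type*} [NormedAddCommGroup H] [InnerProductSpace ℂ H]
    [NormedAddCommGroup E] [InnerProductSpace ℂ E] [CompleteSpace E]
    (A B : H →ₗ[ℂ] E) (hAB : ∀ h, ‖A h‖ = ‖B h‖) :
    ∃ G : WithLp 2 (E × E) ≃ₗᵢ[ℂ] WithLp 2 (E × E),
      ∀ h, G (WithLp.toLp 2 (A h, 0)) = WithLp.toLp 2 (B h, 0) := by
  obtain ⟨w, hw, hA, hB⟩ := vn_partial A B hAB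
  have h1 : ∀ x, w (adjoint w (w x)) = w x := fun x => congrArg (fun f => f x) hw
  have h2 : ∀ x, adjoint w (w (adjoint w x)) = adjoint w x := fun x => by
    have := congrArg adjoint hw
    simp only [adjoint_comp, adjoint_adjoint] at this
    exact congrArg (fun f => f x) this
  let g : WithLp 2 (E × E) →ₗ[ℂ] WithLp 2 (E × E) :=
    { toFun := fun x => WithLp.toLp 2 (w x.fst + (x.snd - w (adjoint w x.snd)),
        (x.fst - adjoint w (w x.fst)) - adjoint w x.snd)
      map_add' := fun x y => by
        apply vn_ext <;> simp <;> abel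
      map_smul' := fun r x => by
        apply vn_ext <;> simp [smul_sub] }
  let g' : WithLp 2 (E × E) →ₗ[ℂ] WithLp 2 (E × E) :=
    { toFun := fun x => WithLp.toLp 2 (adjoint w x.fst + (x.snd - adjoint w (w x.snd)),
        (x.fst - w (adjoint w x.fst)) - w x.snd)
      map_add' := fun x y => by
        apply vn_ext <;> simp <;> abel
      map_smul' := fun r x => by
        apply vn_ext <;> simp [smul_sub] }
  have hg'g : ∀ x, g' (g x) = x := fun x => by
    apply vn_ext <;> simp [g, g', h1, h2]
  have hgg' : ∀ x, g (g' x) = x := fun x => by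
    apply vn_ext <;> simp [g, g', h1, h2]
  have hadj : ∀ x y, inner ℂ (g x) y = inner ℂ x (g' y) := fun x y => by
    have e : inner ℂ (w (adjoint w x.snd)) y.fst = inner ℂ x.snd (w (adjoint w y.fst)) := by
      rw [← adjoint_inner_right, adjoint_inner_left]
    simp [g, g', WithLp.prod_inner_apply, inner_add_left, inner_sub_left, inner_add_right,
      inner_sub_right, adjoint_inner_left, adjoint_inner_right]
    rw [e]
    ring
  let G0 : WithLp 2 (E × E) ≃ₗ[ℂ] WithLp 2 (E × E) :=
    LinearEquiv.ofLinearMap g g' (LinearMap.ext hgg') (LinearMap.ext hg'g)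
  refine ⟨⟨G0, fun x => ?_⟩, fun h => ?_⟩
  · change ‖g x‖ = ‖x‖
    rw [@norm_eq_sqrt_re_inner ℂ, hadj, hg'g, ← @norm_eq_sqrt_re_inner ℂ]
  · change g _ = _
    apply vn_ext <;> simp [g, hA, hB]

/-- Four-fold Hilbert sum, arranged as a double pair. -/
abbrev VNBlock (H : Type*) := WithLp 2 (WithLp 2 (H × H) × WithLp 2 (H × H))

/-- Build an element of the block from its four coordinates. -/
def vnMk {H : Type*} (a b c d : H) : VNBlock H :=
  WithLp.toLp 2 (WithLp.toLp 2 (a, b), WithLp.toLp 2 (c, d))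

theorem vn_enorm_sq {X : Type*} [NormedAddCommGroup X] (x : X) :
    ‖x‖ₑ ^ 2 = ENNReal.ofReal (‖x‖ ^ 2) := by
  rw [ENNReal.ofReal_pow (norm_nonneg _), ofReal_norm]

theorem vn_enorm_prod {X Y : Type*} [NormedAddCommGroup X] [NormedAddCommGroup Y]
    (x : WithLp 2 (X × Y)) : ‖x‖ₑ ^ 2 = ‖x.fst‖ₑ ^ 2 + ‖x.snd‖ₑ ^ 2 := by
  rw [vn_enorm_sq, WithLp.prod_norm_sq_eq_of_L2, ENNReal.ofReal_add (by positivity) (by positivity),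
    ← vn_enorm_sq, ← vn_enorm_sq]

/-- Extended squared norm on the (algebraic) dilation space. -/
noncomputable def vnQ {H : Type*} [NormedAddCommGroup H] (k : H × (ℕ → VNBlock H)) : ENNReal :=
  ‖k.1‖ₑ ^ 2 + ∑' n, ‖k.2 n‖ₑ ^ 2

/-- The sequence part of the isometric dilation. -/
def vnSeq {H : Type*} (a z : H) (f : ℕ → VNBlock H) : ℕ → VNBlock H
  | 0 => vnMk a (f 0).fst.fst z (f 0).snd.fst
  | n + 1 => vnMk (f n).fst.snd (f (n + 1)).fst.fst (f n).snd.snd (f (n + 1)).snd.fst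

/-- The isometric dilation of a single contraction. -/
def vnW {H : Type*} [NormedAddCommGroup H] [InnerProductSpace ℂ H] (T D : H →L[ℂ] H) :
    Module.End ℂ (H × (ℕ → VNBlock H)) where
  toFun k := (T k.1, vnSeq (D k.1) 0 k.2)
  map_add' x y := by
    refine Prod.ext (by simp) (funext fun n => ?_)
    cases n <;> refine vn_ext (vn_ext ?_ ?_) (vn_ext ?_ ?_) <;> simp [vnSeq, vnMk]
  map_smul' r x := by
    refine Prod.ext (by simp) (funext fun n => ?_)
    cases n <;> refine vn_ext (vn_ext ?_ ?_) (vn_ext ?_ ?_) <;> simp [vnSeq, vnMk]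

theorem vnQ_W {H : Type*} [NormedAddCommGroup H] [InnerProductSpace ℂ H] (T D : H →L[ℂ] H)
    (hD : ∀ h, ‖T h‖ ^ 2 + ‖D h‖ ^ 2 = ‖h‖ ^ 2) (k : H × (ℕ → VNBlock H)) :
    vnQ (vnW T D k) = vnQ k := by
  obtain ⟨h, f⟩ := k
  have e : ‖h‖ₑ ^ 2 = ‖T h‖ₑ ^ 2 + ‖D h‖ₑ ^ 2 := by
    rw [vn_enorm_sq, ← hD, ENNReal.ofReal_add (by positivity) (by positivity),
      ← vn_enorm_sq, ← vn_enorm_sq]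
  let a : ℕ → ENNReal := fun n => ‖(f n).fst.fst‖ₑ ^ 2 + ‖(f n).snd.fst‖ₑ ^ 2
  let b : ℕ → ENNReal := fun n => ‖(f n).fst.snd‖ₑ ^ 2 + ‖(f n).snd.snd‖ₑ ^ 2
  have hf : ∀ n, ‖f n‖ₑ ^ 2 = b n + a n := fun n => by
    rw [vn_enorm_prod, vn_enorm_prod, vn_enorm_prod]; simp only [a, b]; ring
  have h0 : ‖vnSeq (D h) 0 f 0‖ₑ ^ 2 = ‖D h‖ₑ ^ 2 + a 0 := by
    rw [vn_enorm_prod, vn_enorm_prod, vn_enorm_prod]; simp [a, vnSeq, vnMk]; ring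
  have h1 : ∀ n, ‖vnSeq (D h) 0 f (n + 1)‖ₑ ^ 2 = b n + a (n + 1) := fun n => by
    rw [vn_enorm_prod, vn_enorm_prod, vn_enorm_prod]; simp only [a, b, vnSeq, vnMk]
    simp; ring
  change ‖T h‖ₑ ^ 2 + ∑' n, ‖vnSeq (D h) 0 f n‖ₑ ^ 2 = ‖h‖ₑ ^ 2 + ∑' n, ‖f n‖ₑ ^ 2
  rw [tsum_eq_zero_add' (f := fun n => ‖vnSeq (D h) 0 f n‖ₑ ^ 2) ENNReal.summable, h0]
  simp_rw [h1, hf]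
  clear_value a b
  rw [ENNReal.tsum_add, ENNReal.tsum_add, e, tsum_eq_zero_add' (f := a) ENNReal.summable]
  ring

/-- Andô's dilation theorem, in the algebraic form that is needed. -/
theorem vn_ando {H : Type*} [NormedAddCommGroup H] [InnerProductSpace ℂ H]
    [CompleteSpace H] (T₁ T₂ : H →L[ℂ] H)
    (hT₁ : ‖T₁‖ ≤ 1) (hT₂ : ‖T₂‖ ≤ 1) (hcomm : T₁ * T₂ = T₂ * T₁) :
    ∃ V₁ V₂ : Module.End ℂ (H × (ℕ → VNBlock H)), Commute V₁ V₂ ∧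
      (∀ k, vnQ (V₁ k) = vnQ k) ∧ (∀ k, vnQ (V₂ k) = vnQ k) ∧
      (∀ k, (V₁ k).1 = T₁ k.1) ∧ (∀ k, (V₂ k).1 = T₂ k.1) := by
  obtain ⟨D₁, hD₁⟩ := vn_defect T₁ hT₁
  obtain ⟨D₂, hD₂⟩ := vn_defect T₂ hT₂
  have hc : ∀ h, T₁ (T₂ h) = T₂ (T₁ h) := fun h => congrArg (fun f => f h) hcomm
  let mk : (H × H) →ₗ[ℂ] WithLp 2 (H × H) := (WithLp.linearEquiv 2 ℂ (H × H)).symm.toLinearMap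
  let A : H →ₗ[ℂ] WithLp 2 (H × H) := mk ∘ₗ ((D₁ ∘L T₂).toLinearMap.prod D₂.toLinearMap)
  let B : H →ₗ[ℂ] WithLp 2 (H × H) := mk ∘ₗ ((D₂ ∘L T₁).toLinearMap.prod D₁.toLinearMap)
  have hA : ∀ h, A h = WithLp.toLp 2 (D₁ (T₂ h), D₂ h) := fun h => rfl
  have hB : ∀ h, B h = WithLp.toLp 2 (D₂ (T₁ h), D₁ h) := fun h => rfl
  have hAB : ∀ h, ‖A h‖ = ‖B h‖ := fun h => by
    rw [← sq_eq_sq₀ (norm_nonneg _) (norm_nonneg _), WithLp.prod_norm_sq_eq_of_L2,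
      WithLp.prod_norm_sq_eq_of_L2, hA, hB]
    simp only [WithLp.toLp_fst, WithLp.toLp_snd]
    have := hD₁ (T₂ h)
    rw [hc] at this
    linarith [hD₂ (T₁ h), hD₁ h, hD₂ h]
  obtain ⟨G, hG⟩ := vn_halmos A B hAB
  let g : Module.End ℂ (H × (ℕ → VNBlock H)) :=
    LinearMap.id.prodMap (G.toLinearEquiv.toLinearMap.compLeft ℕ)
  let g' : Module.End ℂ (H × (ℕ → VNBlock H)) :=
    LinearMap.id.prodMap (G.symm.toLinearEquiv.toLinearMap.compLeft ℕ)
  have hg : ∀ h f, g (h, f) = (h, fun n => G (f n)) := fun h f => rfl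
  have hg' : ∀ h f, g' (h, f) = (h, fun n => G.symm (f n)) := fun h f => rfl
  have hgg' : ∀ k, g (g' k) = k := fun ⟨h, f⟩ => by rw [hg', hg]; simp
  have hg'g : ∀ k, g' (g k) = k := fun ⟨h, f⟩ => by rw [hg, hg']; simp
  have hQg : ∀ k, vnQ (g k) = vnQ k := fun ⟨h, f⟩ => by
    rw [hg]
    have : ∀ x, ‖G x‖ₑ = ‖x‖ₑ := fun x => by rw [← ofReal_norm, G.norm_map, ofReal_norm]
    simp only [vnQ, this]
  have hQg' : ∀ k, vnQ (g' k) = vnQ k := fun k => by rw [← hQg, hgg']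
  have hWW : ∀ (S D S' D' : H →L[ℂ] H) (h : H) (f : ℕ → VNBlock H) (n : ℕ),
      (vnW S D (vnW S' D' (h, f))).2 (n + 1) = f n := by
    intro S D S' D' h f n
    cases n <;> refine vn_ext (vn_ext ?_ ?_) (vn_ext ?_ ?_) <;> rfl
  have hkey : ∀ k, g (vnW T₁ D₁ (vnW T₂ D₂ k)) = vnW T₂ D₂ (vnW T₁ D₁ (g k)) := by
    rintro ⟨h, f⟩
    refine Prod.ext (hc h) (funext fun n => ?_)
    cases n with
    | zero =>
      exact hG h
    | succ n =>
      change G ((vnW T₁ D₁ (vnW T₂ D₂ (h, f))).2 (n + 1)) = _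
      rw [hg, hWW, hWW]
  refine ⟨g * vnW T₁ D₁, vnW T₂ D₂ * g', ?_, fun k => ?_, fun k => ?_, fun k => rfl, fun k => rfl⟩
  · refine LinearMap.ext fun k => ?_
    simp only [Module.End.mul_apply]
    rw [hkey, hgg', hg'g]
  · rw [Module.End.mul_apply, hQg, vnQ_W _ _ hD₁]
  · rw [Module.End.mul_apply, vnQ_W _ _ hD₂, hQg']

theorem vn_conv_enorm {G F ι : Type*} [AddCommGroup G] [Fintype G] [NormedAddCommGroup F]
    [InnerProductSpace ℂ F] (f : G → F) (S : Finset ι) (c : ι → ℂ) (s : ι → G) (M : ℝ)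
    (hM : ∀ ψ : AddChar G ℂ, ‖∑ n ∈ S, c n * ψ (s n)‖ ≤ M) :
    ∑ k, ‖∑ n ∈ S, c n • f (k - s n)‖ₑ ^ 2 ≤ ENNReal.ofReal (M ^ 2) * ∑ k, ‖f k‖ₑ ^ 2 := by
  simp_rw [vn_enorm_sq]
  rw [← ENNReal.ofReal_sum_of_nonneg fun _ _ => by positivity,
    ← ENNReal.ofReal_sum_of_nonneg fun _ _ => by positivity, ← ENNReal.ofReal_mul (by positivity)]
  exact ENNReal.ofReal_le_ofReal (vn_conv f S c s M hM)

theorem vn_conv_Q {G H ι : Type*} [AddCommGroup G] [Fintype G] [NormedAddCommGroup H]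
    [InnerProductSpace ℂ H] (f : G → H × (ℕ → VNBlock H)) (S : Finset ι) (c : ι → ℂ)
    (s : ι → G) (M : ℝ)
    (hM : ∀ ψ : AddChar G ℂ, ‖∑ n ∈ S, c n * ψ (s n)‖ ≤ M) :
    ∑ k, vnQ (∑ n ∈ S, c n • f (k - s n)) ≤ ENNReal.ofReal (M ^ 2) * ∑ k, vnQ (f k) := by
  simp only [vnQ, Finset.sum_add_distrib, mul_add]
  rw [← Summable.tsum_finsetSum fun _ _ => ENNReal.summable,
    ← Summable.tsum_finsetSum fun _ _ => ENNReal.summable, ← ENNReal.tsum_mul_left]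
  refine add_le_add ?_ (ENNReal.tsum_le_tsum fun i => ?_)
  · have := vn_conv_enorm (fun k => (f k).1) S c s M hM
    simpa [Prod.fst_sum] using this
  · have := vn_conv_enorm (fun k => (f k).2 i) S c s M hM
    simpa [Prod.snd_sum] using this

theorem vn_finite {H : Type*} [NormedAddCommGroup H] [InnerProductSpace ℂ H]
    [CompleteSpace H] (T₁ T₂ : H →L[ℂ] H)
    (hT₁ : ‖T₁‖ ≤ 1) (hT₂ : ‖T₂‖ ≤ 1) (hcomm : T₁ * T₂ = T₂ * T₁)
    (c : (ℕ × ℕ) →₀ ℂ) (M : ℝ) (hM0 : 0 ≤ M)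
    (hM : ∀ z w : ℂ, ‖z‖ ≤ 1 → ‖w‖ ≤ 1 → ‖∑ p ∈ c.support, c p * (z ^ p.1 * w ^ p.2)‖ ≤ M)
    (d : ℕ) (hd : ∀ p ∈ c.support, p.1 ≤ d ∧ p.2 ≤ d) (h : H) (N : ℕ) :
    N * ‖(∑ p ∈ c.support, c p • (T₁ ^ p.1 * T₂ ^ p.2)) h‖ ≤ M * ((N + d + 1) * ‖h‖) := by
  obtain ⟨V₁, V₂, hV, hQ₁, hQ₂, hP₁, hP₂⟩ := vn_ando T₁ T₂ hT₁ hT₂ hcomm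
  have hQ₁n : ∀ n k, vnQ ((V₁ ^ n) k) = vnQ k := fun n => by
    induction n with
    | zero => intro k; rfl
    | succ n ih => intro k; rw [pow_succ', Module.End.mul_apply, hQ₁, ih]
  have hQ₂n : ∀ n k, vnQ ((V₂ ^ n) k) = vnQ k := fun n => by
    induction n with
    | zero => intro k; rfl
    | succ n ih => intro k; rw [pow_succ', Module.End.mul_apply, hQ₂, ih]
  have hP₁n : ∀ n k, ((V₁ ^ n) k).1 = (T₁ ^ n) k.1 := fun n => by
    induction n with
    | zero => intro k; rfl
    | succ n ih => intro k; rw [pow_succ', Module.End.mul_apply, hP₁, ih, pow_succ']; rfl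
  have hP₂n : ∀ n k, ((V₂ ^ n) k).1 = (T₂ ^ n) k.1 := fun n => by
    induction n with
    | zero => intro k; rfl
    | succ n ih => intro k; rw [pow_succ', Module.End.mul_apply, hP₂, ih, pow_succ']; rfl
  let L := N + d + 1
  let k0 : H × (ℕ → VNBlock H) := (h, 0)
  have hk0 : vnQ k0 = ‖h‖ₑ ^ 2 := by simp [vnQ, k0]
  let f : ZMod L × ZMod L → H × (ℕ → VNBlock H) := fun m =>
    (V₁ ^ (L - m.1.val)) ((V₂ ^ (L - m.2.val)) k0)
  let s : ℕ × ℕ → ZMod L × ZMod L := fun p => ((p.1 : ZMod L), (p.2 : ZMod L))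
  have hψ : ∀ ψ : AddChar (ZMod L × ZMod L) ℂ, ‖∑ n ∈ c.support, c n * ψ (s n)‖ ≤ M := by
    intro ψ
    have hs : ∀ n, ψ (s n) = ψ (1, 0) ^ n.1 * ψ (0, 1) ^ n.2 := fun n => by
      rw [← AddChar.map_nsmul_eq_pow, ← AddChar.map_nsmul_eq_pow, ← AddChar.map_add_eq_mul]
      congr 1
      simp [s]
    simp_rw [hs]
    exact hM _ _ (ψ.norm_apply _).le (ψ.norm_apply _).le
  have hconv := vn_conv_Q f c.support c s M hψ
  have hf : ∀ m, vnQ (f m) = ‖h‖ₑ ^ 2 := fun m => by simp only [f]; rw [hQ₁n, hQ₂n, hk0]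
  set R := (∑ p ∈ c.support, c p • (T₁ ^ p.1 * T₂ ^ p.2)) h with hR
  have hlow : ∀ k : ZMod L × ZMod L, d ≤ k.1.val → d ≤ k.2.val →
      ‖R‖ₑ ^ 2 ≤ vnQ (∑ n ∈ c.support, c n • f (k - s n)) := by
    intro k hk1 hk2
    have hsub : ∀ (a : ZMod L) (i : ℕ), i ≤ d → d ≤ a.val → L - (a - i).val = (L - a.val) + i := by
      intro a i hi ha
      have hlt := ZMod.val_lt a
      have hi' : ((i : ZMod L)).val = i := ZMod.val_cast_of_lt (by omega)
      rw [ZMod.val_sub (by rw [hi']; omega), hi']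
      omega
    have : ∑ n ∈ c.support, c n • f (k - s n) = (V₁ ^ (L - k.1.val)) ((V₂ ^ (L - k.2.val))
        (∑ n ∈ c.support, c n • (V₁ ^ n.1) ((V₂ ^ n.2) k0))) := by
      rw [map_sum, map_sum]
      refine Finset.sum_congr rfl fun n hn => ?_
      rw [map_smul, map_smul]
      congr 1
      simp only [f, s, Prod.fst_sub, Prod.snd_sub]
      rw [hsub _ _ (hd n hn).1 hk1, hsub _ _ (hd n hn).2 hk2, pow_add, pow_add]
      simp only [Module.End.mul_apply]
      congr 1
      have hc2 : V₁ ^ n.1 * V₂ ^ (L - k.2.val) = V₂ ^ (L - k.2.val) * V₁ ^ n.1 :=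
        (hV.pow_pow _ _).eq
      exact congrArg (fun F => F ((V₂ ^ n.2) k0)) hc2
    rw [this, hQ₁n, hQ₂n]
    refine le_trans (le_of_eq ?_) (le_self_add (a := ‖(∑ n ∈ c.support, c n • (V₁ ^ n.1) ((V₂ ^ n.2) k0)).1‖ₑ ^ 2))
    rw [hR, Prod.fst_sum]
    simp [hP₁n, hP₂n, k0]
  let e : Fin N × Fin N → ZMod L × ZMod L := fun p => (((p.1 + d : ℕ) : ZMod L), ((p.2 + d : ℕ) : ZMod L))
  have hval : ∀ i : Fin N, (((i + d : ℕ) : ZMod L)).val = i + d := fun i =>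
    ZMod.val_cast_of_lt (by omega)
  have he : Function.Injective e := by
    rintro ⟨i, j⟩ ⟨i', j'⟩ hij
    have h1 := congrArg (fun q => q.1.val) hij
    have h2 := congrArg (fun q => q.2.val) hij
    simp only [e, hval] at h1 h2
    ext <;> simp <;> omega
  have hcount : (N : ENNReal) ^ 2 * ‖R‖ₑ ^ 2 ≤ ENNReal.ofReal (M ^ 2) * ((L : ENNReal) ^ 2 * ‖h‖ₑ ^ 2) := by
    calc (N : ENNReal) ^ 2 * ‖R‖ₑ ^ 2 = ∑ p : Fin N × Fin N, ‖R‖ₑ ^ 2 := by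
          simp [sq]
      _ ≤ ∑ p : Fin N × Fin N, vnQ (∑ n ∈ c.support, c n • f (e p - s n)) :=
          Finset.sum_le_sum fun p _ => hlow _ (by simp only [e]; rw [hval]; omega)
            (by simp only [e]; rw [hval]; omega)
      _ = ∑ k ∈ Finset.univ.map ⟨e, he⟩, vnQ (∑ n ∈ c.support, c n • f (k - s n)) := by
          rw [Finset.sum_map]; rfl
      _ ≤ ∑ k, vnQ (∑ n ∈ c.support, c n • f (k - s n)) :=
          Finset.sum_le_sum_of_subset (Finset.subset_univ _)
      _ ≤ _ := hconv
      _ = _ := by simp [hf, sq]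
  have hreal : ENNReal.ofReal ((N * ‖R‖) ^ 2) ≤ ENNReal.ofReal ((M * (L * ‖h‖)) ^ 2) := by
    rw [mul_pow, mul_pow, mul_pow, ENNReal.ofReal_mul (by positivity),
      ENNReal.ofReal_mul (by positivity), ENNReal.ofReal_mul (by positivity), ← vn_enorm_sq,
      ← vn_enorm_sq, ENNReal.ofReal_pow (p := (N : ℝ)) (by positivity), ENNReal.ofReal_pow (p := (L : ℝ)) (by positivity)]
    simpa using hcount
  have := (ENNReal.ofReal_le_ofReal_iff (by positivity)).1 hreal
  have := (sq_le_sq₀ (by positivity) (by positivity)).1 this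
  simpa [L] using this

open ContinuousLinearMap

/-- **Two-variable von Neumann inequality.** For commuting contractions `T₁, T₂` on a
complex Hilbert space and any polynomial `p(z,w) = Σ c(i,j) zⁱ wʲ` (finitely supported
coefficients), `‖p(T₁,T₂)‖` is bounded by the sup of `|p|` on the closed bidisk. -/
theorem two_variable_von_neumann {H : Type*} [NormedAddCommGroup H] [InnerProductSpace ℂ H]
    [CompleteSpace H] (T₁ T₂ : H →L[ℂ] H)
    (hT₁ : ‖T₁‖ ≤ 1) (hT₂ : ‖T₂‖ ≤ 1) (hcomm : T₁ * T₂ = T₂ * T₁)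
    (c : (ℕ × ℕ) →₀ ℂ) :
    ‖∑ p ∈ c.support, c p • (T₁ ^ p.1 * T₂ ^ p.2)‖ ≤
      sSup ((fun zw : ℂ × ℂ => ‖∑ p ∈ c.support, c p * (zw.1 ^ p.1 * zw.2 ^ p.2)‖) ''
        {zw : ℂ × ℂ | ‖zw.1‖ ≤ 1 ∧ ‖zw.2‖ ≤ 1}) := by
  set M := sSup ((fun zw : ℂ × ℂ => ‖∑ p ∈ c.support, c p * (zw.1 ^ p.1 * zw.2 ^ p.2)‖) ''
        {zw : ℂ × ℂ | ‖zw.1‖ ≤ 1 ∧ ‖zw.2‖ ≤ 1}) with hMdef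
  have hbdd : BddAbove ((fun zw : ℂ × ℂ => ‖∑ p ∈ c.support, c p * (zw.1 ^ p.1 * zw.2 ^ p.2)‖) ''
        {zw : ℂ × ℂ | ‖zw.1‖ ≤ 1 ∧ ‖zw.2‖ ≤ 1}) := by
    refine ⟨∑ p ∈ c.support, ‖c p‖, ?_⟩
    rintro _ ⟨zw, ⟨h1, h2⟩, rfl⟩
    refine (norm_sum_le _ _).trans (Finset.sum_le_sum fun p _ => ?_)
    rw [norm_mul, norm_mul, norm_pow, norm_pow]
    exact mul_le_of_le_one_right (norm_nonneg _)
      (mul_le_one₀ (pow_le_one₀ (norm_nonneg _) h1) (by positivity) (pow_le_one₀ (norm_nonneg _) h2))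
  have hM : ∀ z w : ℂ, ‖z‖ ≤ 1 → ‖w‖ ≤ 1 →
      ‖∑ p ∈ c.support, c p * (z ^ p.1 * w ^ p.2)‖ ≤ M := fun z w hz hw =>
    le_csSup hbdd ⟨(z, w), ⟨hz, hw⟩, rfl⟩
  have hM0 : 0 ≤ M := (norm_nonneg _).trans (hM 0 0 (by simp) (by simp))
  refine ContinuousLinearMap.opNorm_le_bound _ hM0 fun h => ?_
  let d := c.support.sup fun p => max p.1 p.2
  have hd : ∀ p ∈ c.support, p.1 ≤ d ∧ p.2 ≤ d := fun p hp => by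
    have := Finset.le_sup (f := fun p : ℕ × ℕ => max p.1 p.2) hp
    exact ⟨(le_max_left _ _).trans this, (le_max_right _ _).trans this⟩
  have hfin := vn_finite T₁ T₂ hT₁ hT₂ hcomm c M hM0 hM d hd h
  by_contra! hlt
  obtain ⟨N, hN⟩ := exists_nat_gt (M * ‖h‖ * (d + 1) /
    (‖(∑ p ∈ c.support, c p • (T₁ ^ p.1 * T₂ ^ p.2)) h‖ - M * ‖h‖))
  rw [div_lt_iff₀ (by linarith)] at hN
  have := hfin N
  linarith
end
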